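/- arXiv:1409.3583 — 2 statements merged into one kernel-verified Lean document; each statement's English description precedes it below -/
import Mathlib

section
/- Let G be a finite simple gap-free graph with edge ideal I(G) and nonzero 3-path ideal I_3(G). If reg(I(G)) = r, then reg(I_3(G)) ≤ max{r, 3}. -/
open MvPolynomial

/-! Graph-theoretic definitions -/

/-- A list of vertices is a path in `G`: consecutive vertices are adjacent and all
vertices are distinct. -/
def SimpleGraph.IsPathList {V : Type*} (G : SimpleGraph V) (l : List V) : Prop :=
  l.Chain' G.Adj ∧ l.Nodup

/-- The `t`-path ideal of a graph: the ideal generated by the monomials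
`x_{v_1} ⋯ x_{v_t}` where `v_1 ⋯ v_t` is a path on `t` distinct vertices of `G`. -/
noncomputable def pathIdeal {V K : Type*} [CommRing K] (G : SimpleGraph V) (t : ℕ) :
    Ideal (MvPolynomial V K) :=
  Ideal.span { p | ∃ l : List V, G.IsPathList l ∧ l.length = t ∧ p = (l.map X).prod }

/-- The edge ideal of a graph. -/
noncomputable def edgeIdeal {V K : Type*} [CommRing K] (G : SimpleGraph V) :
    Ideal (MvPolynomial V K) :=
  Ideal.span { p | ∃ u v, G.Adj u v ∧ p = X u * X v }

/-- `G` is gap-free: any two vertex-disjoint edges are joined by an edge. -/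
def SimpleGraph.GapFree {V : Type*} (G : SimpleGraph V) : Prop :=
  ∀ a b c d : V, G.Adj a b → G.Adj c d → a ≠ c → a ≠ d → b ≠ c → b ≠ d →
    (G.Adj a c ∨ G.Adj a d ∨ G.Adj b c ∨ G.Adj b d)

/-- `G` is claw-free: it has no induced `K_{1,3}`. -/
def SimpleGraph.ClawFree {V : Type*} (G : SimpleGraph V) : Prop :=
  ∀ v a b c : V, G.Adj v a → G.Adj v b → G.Adj v c → a ≠ b → a ≠ c → b ≠ c →
    (G.Adj a b ∨ G.Adj a c ∨ G.Adj b c)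

/-- `G` is cricket-free: it has no induced cricket. -/
def SimpleGraph.CricketFree {V : Type*} (G : SimpleGraph V) : Prop :=
  ¬ ∃ w1 w2 w3 w4 w5 : V,
      w1 ≠ w2 ∧ w1 ≠ w3 ∧ w1 ≠ w4 ∧ w1 ≠ w5 ∧ w2 ≠ w3 ∧ w2 ≠ w4 ∧ w2 ≠ w5 ∧
      w3 ≠ w4 ∧ w3 ≠ w5 ∧ w4 ≠ w5 ∧
      G.Adj w1 w3 ∧ G.Adj w2 w3 ∧ G.Adj w3 w4 ∧ G.Adj w3 w5 ∧ G.Adj w4 w5 ∧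
      ¬ G.Adj w1 w2 ∧ ¬ G.Adj w1 w4 ∧ ¬ G.Adj w1 w5 ∧ ¬ G.Adj w2 w4 ∧ ¬ G.Adj w2 w5

/-- `w : Fin n → V` is an induced cycle of length `n` in `H`. -/
def SimpleGraph.IsInducedCycle {V : Type*} (H : SimpleGraph V) {n : ℕ} (w : Fin n → V) :
    Prop :=
  3 ≤ n ∧ Function.Injective w ∧
    ∀ i j : Fin n, H.Adj (w i) (w j) ↔
      ((j : ℕ) = ((i : ℕ) + 1) % n ∨ (i : ℕ) = ((j : ℕ) + 1) % n)

/-- A graph is chordal if it has no induced cycle of length at least four. -/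
def SimpleGraph.Chordal {V : Type*} (H : SimpleGraph V) : Prop :=
  ∀ (n : ℕ), 4 ≤ n → ∀ w : Fin n → V, ¬ H.IsInducedCycle w

/-! Monomial ideals, graded Betti numbers via the Taylor complex, and
Castelnuovo–Mumford regularity. -/

/-- The monomial ideal generated by the monomials with exponent vectors `gens`. -/
noncomputable def monomialSpan {V K : Type*} [CommRing K] {k : ℕ}
    (gens : Fin k → (V →₀ ℕ)) : Ideal (MvPolynomial V K) :=
  Ideal.span (Set.range fun i => monomial (gens i) (1 : K))

/-- The total degree of an exponent vector. -/
def monomialDegree {V : Type*} (m : V →₀ ℕ) : ℕ := m.sum fun _ n => n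

/-- `m` is a minimal monomial generator of the monomial ideal `I`. -/
def IsMinimalMonomialGen {V K : Type*} [CommRing K] (I : Ideal (MvPolynomial V K))
    (m : V →₀ ℕ) : Prop :=
  monomial m (1 : K) ∈ I ∧ ∀ m' : V →₀ ℕ, m' ≤ m → m' ≠ m → monomial m' (1 : K) ∉ I

/-- The lcm of the monomials `gens i`, `i ∈ T`. -/
noncomputable def taylorLcm {V : Type*} {k : ℕ} (gens : Fin k → (V →₀ ℕ))
    (T : Finset (Fin k)) : V →₀ ℕ :=
  T.sup gens

open Classical in
/-- The boundary of a basis element of the Taylor complex of `gens`, tensored with the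
residue field `K`: only the terms where the lcm is unchanged survive. -/
noncomputable def taylorBoundary {V K : Type*} [Field K] {k : ℕ}
    (gens : Fin k → (V →₀ ℕ)) (T : Finset (Fin k)) : Finset (Fin k) →₀ K :=
  ∑ t ∈ T, if taylorLcm gens (T.erase t) = taylorLcm gens T then
      ((-1 : K) ^ (T.filter fun s => s < t).card) • Finsupp.single (T.erase t) (1 : K)
    else 0

/-- The differential of the Taylor complex of `gens` tensored with `K`. -/
noncomputable def taylorDiff {V K : Type*} [Field K] {k : ℕ}
    (gens : Fin k → (V →₀ ℕ)) : (Finset (Fin k) →₀ K) →ₗ[K] (Finset (Fin k) →₀ K) :=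
  Finsupp.lsum K fun T =>
    LinearMap.toSpanSingleton K (Finset (Fin k) →₀ K) (taylorBoundary gens T)

/-- The graded piece of the Taylor complex in homological degree `i` and internal
degree `j`. -/
noncomputable def taylorPiece {V K : Type*} [Field K] {k : ℕ}
    (gens : Fin k → (V →₀ ℕ)) (i j : ℕ) : Submodule K (Finset (Fin k) →₀ K) :=
  Submodule.span K { f | ∃ T : Finset (Fin k), T.card = i ∧
    monomialDegree (taylorLcm gens T) = j ∧ f = Finsupp.single T (1 : K) }

/-- Nonvanishing of the degree-`j` part of the `i`-th homology of the Taylor complex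
of `gens` tensored with `K`; since the Taylor complex is a graded free resolution of
`S/I` (where `I` is the ideal generated by the monomials `gens`), this says exactly
that `Tor_i^S(S/I, K)_j ≠ 0`. -/
noncomputable def taylorHomologyNonzero {V K : Type*} [Field K] {k : ℕ}
    (gens : Fin k → (V →₀ ℕ)) (i j : ℕ) : Prop :=
  ¬ (LinearMap.ker (taylorDiff (K := K) gens) ⊓ taylorPiece (K := K) gens i j ≤
      Submodule.map (taylorDiff (K := K) gens) (taylorPiece (K := K) gens (i + 1) j))

/-- For a monomial ideal `I`, `Tor_i^S(I, K)_j ≠ 0`.  (Since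
`Tor_i^S(I,K) ≅ Tor_{i+1}^S(S/I,K)`, this is computed from the Taylor complex on any
family of monomial generators of `I`.) -/
def IdealTorNonzero {V K : Type*} [Field K] (I : Ideal (MvPolynomial V K))
    (i j : ℕ) : Prop :=
  ∃ (k : ℕ) (gens : Fin k → (V →₀ ℕ)), I = monomialSpan gens ∧
    taylorHomologyNonzero (K := K) gens (i + 1) j

/-- The Castelnuovo–Mumford regularity of a monomial ideal `I`:
`reg I = max { j - i : Tor_i^S(I, K)_j ≠ 0 }`. -/
noncomputable def reg {V K : Type*} [Field K] (I : Ideal (MvPolynomial V K)) : ℕ :=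
  sSup { d | ∃ i j : ℕ, IdealTorNonzero I i j ∧ d = j - i }

namespace TaylorAux

open Classical in
/-- boundary with base monomial `m` -/
noncomputable def bdry {V K : Type*} [Field K] {k : ℕ}
    (g : Fin k → (V →₀ ℕ)) (m : V →₀ ℕ) (T : Finset (Fin k)) : Finset (Fin k) →₀ K :=
  ∑ t ∈ T, if m ⊔ (T.erase t).sup g = m ⊔ T.sup g then
      ((-1 : K) ^ (T.filter fun s => s < t).card) • Finsupp.single (T.erase t) (1 : K)
    else 0

noncomputable def D {V K : Type*} [Field K] {k : ℕ}
    (g : Fin k → (V →₀ ℕ)) (m : V →₀ ℕ) :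
    (Finset (Fin k) →₀ K) →ₗ[K] (Finset (Fin k) →₀ K) :=
  Finsupp.lsum K fun T =>
    LinearMap.toSpanSingleton K (Finset (Fin k) →₀ K) (bdry g m T)

def cells {V : Type*} {k : ℕ} (g : Fin k → (V →₀ ℕ)) (m : V →₀ ℕ) (A : Finset (Fin k))
    (i j : ℕ) : Set (Finset (Fin k)) :=
  {T | T ⊆ A ∧ T.card = i ∧ monomialDegree (m ⊔ T.sup g) = j}

noncomputable def Pc {V : Type*} (K : Type*) [Field K] {k : ℕ} (g : Fin k → (V →₀ ℕ))
    (m : V →₀ ℕ) (A : Finset (Fin k)) (i j : ℕ) : Submodule K (Finset (Fin k) →₀ K) :=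
  Finsupp.supported K K (cells g m A i j)

/-- vanishing of homology -/
def Van {V : Type*} (K : Type*) [Field K] {k : ℕ} (g : Fin k → (V →₀ ℕ))
    (m : V →₀ ℕ) (A : Finset (Fin k)) (i j : ℕ) : Prop :=
  ∀ c ∈ Pc K g m A i j, D g m c = 0 → ∃ d ∈ Pc K g m A (i + 1) j, D g m d = c

section
variable {V K : Type*} [Field K] {k : ℕ} (g : Fin k → (V →₀ ℕ)) (m : V →₀ ℕ)

lemma D_single (T : Finset (Fin k)) (r : K) :
    D g m (Finsupp.single T r) = r • bdry g m T := by
  simp [D]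

def sg (K : Type*) [Field K] {k : ℕ} (a : Fin k) (T : Finset (Fin k)) : K :=
  (-1 : K) ^ (T.filter fun s => s < a).card

lemma sg_sq (a : Fin k) (T : Finset (Fin k)) : sg K a T * sg K a T = 1 := by
  unfold sg
  rw [← mul_pow]; simp

noncomputable def ins (K : Type*) [Field K] {k : ℕ} (a : Fin k) :
    (Finset (Fin k) →₀ K) →ₗ[K] (Finset (Fin k) →₀ K) :=
  Finsupp.lsum K fun T =>
    LinearMap.toSpanSingleton K (Finset (Fin k) →₀ K) (Finsupp.single (insert a T) (sg K a T))

noncomputable def del (K : Type*) [Field K] {k : ℕ} (a : Fin k) :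
    (Finset (Fin k) →₀ K) →ₗ[K] (Finset (Fin k) →₀ K) :=
  Finsupp.lsum K fun T =>
    LinearMap.toSpanSingleton K (Finset (Fin k) →₀ K)
      (if a ∈ T then Finsupp.single (T.erase a) (sg K a (T.erase a)) else 0)

open Classical in
noncomputable def pr (a : Fin k) :
    (Finset (Fin k) →₀ K) →ₗ[K] (Finset (Fin k) →₀ K) :=
  Finsupp.lsum K fun T =>
    LinearMap.toSpanSingleton K (Finset (Fin k) →₀ K)
      (if m ⊔ T.sup g = (m ⊔ g a) ⊔ T.sup g then Finsupp.single T 1 else 0)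

lemma ins_single (a : Fin k) (T : Finset (Fin k)) (r : K) :
    ins K a (Finsupp.single T r) = r • Finsupp.single (insert a T) (sg K a T) := by
  simp [ins]

lemma del_single (a : Fin k) (T : Finset (Fin k)) (r : K) :
    del K a (Finsupp.single T r) =
      r • (if a ∈ T then Finsupp.single (T.erase a) (sg K a (T.erase a)) else 0) := by
  simp only [del, Finsupp.lsum_single, LinearMap.toSpanSingleton_apply]

open Classical in
lemma pr_single (a : Fin k) (T : Finset (Fin k)) (r : K) :
    pr g m a (Finsupp.single T r) =
      r • (if m ⊔ T.sup g = (m ⊔ g a) ⊔ T.sup g then Finsupp.single T 1 else 0) := by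
  simp only [pr, Finsupp.lsum_single, LinearMap.toSpanSingleton_apply]

lemma sup_insert' (a : Fin k) (T : Finset (Fin k)) :
    m ⊔ (insert a T).sup g = (m ⊔ g a) ⊔ T.sup g := by
  rw [Finset.sup_insert, sup_assoc]

/-- linear extension principle on supported submodules -/
lemma supp_ind {s : Set (Finset (Fin k))} {P : (Finset (Fin k) →₀ K) → Prop}
    (h0 : P 0) (ha : ∀ x y, P x → P y → P (x + y))
    (hs : ∀ T ∈ s, ∀ r : K, P (Finsupp.single T r))
    {c : Finset (Fin k) →₀ K} (hc : c ∈ Finsupp.supported K K s) : P c := by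
  rw [Finsupp.mem_supported] at hc
  rw [← Finsupp.sum_single c]
  unfold Finsupp.sum
  exact Finset.sum_induction _ P ha h0 (fun T hT => hs T (hc hT) _)

lemma ins_D_single (a : Fin k) (T : Finset (Fin k)) (haT : a ∉ T) :
    D g m (ins K a (Finsupp.single T 1)) =
      pr g m a (Finsupp.single T 1) - ins K a (D g (m ⊔ g a) (Finsupp.single T 1)) := by
  classical
  rw [ins_single, one_smul, D_single, pr_single, D_single, one_smul, one_smul]
  unfold bdry
  rw [Finset.sum_insert haT, Finset.erase_insert haT, smul_add, map_sum, Finset.smul_sum,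
    sub_eq_add_neg, ← Finset.sum_neg_distrib]
  congr 1
  · rw [sup_insert']
    split_ifs
    · have : (insert a T).filter (fun s => s < a) = T.filter (fun s => s < a) := by
        rw [Finset.filter_insert]; simp
      rw [this, smul_smul]
      change (sg K a T * sg K a T) • _ = _
      rw [sg_sq, one_smul]
    · simp
  · apply Finset.sum_congr rfl
    intro t ht
    have hta : t ≠ a := fun h => haT (h ▸ ht)
    have he : (insert a T).erase t = insert a (T.erase t) :=
      Finset.erase_insert_of_ne hta.symm
    rw [he, sup_insert', sup_insert']
    split_ifs
    · rw [map_smul, ins_single, one_smul, smul_smul, ← smul_neg, ]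
      rw [Finsupp.smul_single, ← Finsupp.single_neg, Finsupp.smul_single]
      congr 1
      simp only [smul_eq_mul, mul_one]
      unfold sg
      rw [Finset.filter_insert]
      rcases lt_or_gt_of_ne hta with h | h
      · rw [if_neg (not_lt.mpr h.le)]
        have h1 : T.filter (fun s => s < a) = insert t ((T.erase t).filter (fun s => s < a)) := by
          rw [← Finset.insert_erase ht, Finset.filter_insert, if_pos h]; simp
        rw [h1, Finset.card_insert_of_notMem (by simp)]
        ring
      · rw [if_pos h, Finset.card_insert_of_notMem (by simp [haT])]
        have h1 : T.filter (fun s => s < a) = ((T.erase t).filter (fun s => s < a)) := by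
          conv_lhs => rw [← Finset.insert_erase ht, Finset.filter_insert, if_neg (not_lt.mpr h.le)]
        rw [h1]
        ring
    · simp

lemma ins_D (a : Fin k) {c : Finset (Fin k) →₀ K}
    (hc : c ∈ Finsupp.supported K K {T : Finset (Fin k) | a ∉ T}) :
    D g m (ins K a c) = pr g m a c - ins K a (D g (m ⊔ g a) c) := by
  refine supp_ind (P := fun c => D g m (ins K a c) = pr g m a c - ins K a (D g (m ⊔ g a) c))
    ?_ ?_ ?_ hc
  · simp
  · intro x y hx hy
    simp only [map_add, hx, hy]; abel
  · intro T hT r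
    have : Finsupp.single T r = r • Finsupp.single T (1 : K) := by simp
    rw [this]
    simp only [map_smul]
    rw [ins_D_single g m a T hT, smul_sub]

lemma pr_D (a : Fin k) (c : Finset (Fin k) →₀ K) :
    D g m (pr g m a c) = pr g m a (D g (m ⊔ g a) c) := by
  classical
  induction c using Finsupp.induction_linear with
  | zero => simp
  | add x y hx hy => simp only [map_add, hx, hy]
  | single T r =>
    rw [pr_single, D_single, map_smul, map_smul]
    congr 1
    unfold bdry
    rw [map_sum]
    by_cases h : m ⊔ T.sup g = (m ⊔ g a) ⊔ T.sup g
    · rw [if_pos h, D_single, one_smul]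
      unfold bdry
      apply Finset.sum_congr rfl
      intro t ht
      have hle : (T.erase t).sup g ≤ T.sup g := Finset.sup_mono (Finset.erase_subset _ _)
      have h3 : m ⊔ (T.erase t).sup g ≤ (m ⊔ g a) ⊔ (T.erase t).sup g :=
        sup_le_sup_right le_sup_left _
      have h4 : (m ⊔ g a) ⊔ (T.erase t).sup g ≤ (m ⊔ g a) ⊔ T.sup g := sup_le_sup_left hle _
      by_cases h1 : m ⊔ (T.erase t).sup g = m ⊔ T.sup g
      · have h2 : (m ⊔ g a) ⊔ (T.erase t).sup g = (m ⊔ g a) ⊔ T.sup g :=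
          le_antisymm h4 (by rw [← h, ← h1]; exact h3)
        rw [if_pos h1, if_pos h2, map_smul, pr_single, if_pos (by rw [h1, h2, h]), one_smul]
      · rw [if_neg h1]
        split_ifs with h2
        · rw [map_smul, pr_single, if_neg, smul_zero, smul_zero]
          rw [h2, ← h]; exact h1
        · simp
    · rw [if_neg h, map_zero]
      symm
      apply Finset.sum_eq_zero
      intro t ht
      have hle : (T.erase t).sup g ≤ T.sup g := Finset.sup_mono (Finset.erase_subset _ _)
      split_ifs with h2
      · rw [map_smul, pr_single, if_neg, smul_zero, smul_zero]
        intro h5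
        apply h
        apply le_antisymm (sup_le_sup_right le_sup_left _)
        rw [← h2, ← h5]
        exact sup_le_sup_left hle _
      · simp

lemma del_ins (a : Fin k) {c : Finset (Fin k) →₀ K}
    (hc : c ∈ Finsupp.supported K K {T : Finset (Fin k) | a ∉ T}) :
    del K a (ins K a c) = c := by
  refine supp_ind (P := fun c => del K a (ins K a c) = c) ?_ ?_ ?_ hc
  · simp
  · intro x y hx hy
    simp only [map_add, hx, hy]
  · intro T hT r
    rw [ins_single, map_smul, del_single, if_pos (Finset.mem_insert_self _ _),
      Finset.erase_insert hT]
    simp [sg_sq]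

lemma del_free (a : Fin k) {c : Finset (Fin k) →₀ K}
    (hc : c ∈ Finsupp.supported K K {T : Finset (Fin k) | a ∉ T}) :
    del K a c = 0 := by
  refine supp_ind (P := fun c => del K a c = 0) ?_ ?_ ?_ hc
  · simp
  · intro x y hx hy
    simp only [map_add, hx, hy, add_zero]
  · intro T hT r
    rw [del_single, if_neg hT, smul_zero]

lemma split_unique (a : Fin k) {x y z w : Finset (Fin k) →₀ K}
    (hx : x ∈ Finsupp.supported K K {T : Finset (Fin k) | a ∉ T})
    (hy : y ∈ Finsupp.supported K K {T : Finset (Fin k) | a ∉ T})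
    (hz : z ∈ Finsupp.supported K K {T : Finset (Fin k) | a ∉ T})
    (hw : w ∈ Finsupp.supported K K {T : Finset (Fin k) | a ∉ T})
    (h : x + ins K a y = z + ins K a w) : x = z ∧ y = w := by
  have h1 := congrArg (del K a) h
  rw [map_add, map_add, del_ins a hy, del_ins a hw, del_free a hx, del_free a hz,
    zero_add, zero_add] at h1
  subst h1
  exact ⟨add_right_cancel h, rfl⟩

lemma D_free (a : Fin k) {c : Finset (Fin k) →₀ K}
    (hc : c ∈ Finsupp.supported K K {T : Finset (Fin k) | a ∉ T}) :
    D g m c ∈ Finsupp.supported K K {T : Finset (Fin k) | a ∉ T} := by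
  classical
  refine supp_ind (P := fun c => D g m c ∈ Finsupp.supported K K {T : Finset (Fin k) | a ∉ T})
    ?_ ?_ ?_ hc
  · simp
  · intro x y hx hy
    rw [map_add]; exact Submodule.add_mem _ hx hy
  · intro T hT r
    rw [D_single]
    apply Submodule.smul_mem
    unfold bdry
    apply Submodule.sum_mem
    intro t ht
    split_ifs
    · apply Submodule.smul_mem
      apply Finsupp.single_mem_supported
      intro h; exact hT (Finset.mem_of_mem_erase h)
    · exact Submodule.zero_mem _

lemma pr_mem (a : Fin k) {s : Set (Finset (Fin k))} {c : Finset (Fin k) →₀ K}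
    (hc : c ∈ Finsupp.supported K K s) : pr g m a c ∈ Finsupp.supported K K s := by
  classical
  refine supp_ind (P := fun c => pr g m a c ∈ Finsupp.supported K K s) ?_ ?_ ?_ hc
  · simp
  · intro x y hx hy
    rw [map_add]; exact Submodule.add_mem _ hx hy
  · intro T hT r
    rw [pr_single]
    apply Submodule.smul_mem
    split_ifs
    · exact Finsupp.single_mem_supported K _ hT
    · exact Submodule.zero_mem _

lemma pr_Pc (a : Fin k) {A : Finset (Fin k)} {i j : ℕ} {c : Finset (Fin k) →₀ K}
    (hc : c ∈ Pc K g (m ⊔ g a) A i j) : pr g m a c ∈ Pc K g m A i j := by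
  classical
  refine supp_ind (P := fun c => pr g m a c ∈ Pc K g m A i j) ?_ ?_ ?_ hc
  · simp
  · intro x y hx hy
    rw [map_add]; exact Submodule.add_mem _ hx hy
  · intro T hT r
    rw [pr_single]
    apply Submodule.smul_mem
    split_ifs with h
    · refine Finsupp.single_mem_supported K _ ⟨hT.1, hT.2.1, ?_⟩
      rw [h]; exact hT.2.2
    · exact Submodule.zero_mem _

lemma ins_Pc (a : Fin k) {A : Finset (Fin k)} (haA : a ∉ A) {i j : ℕ}
    {c : Finset (Fin k) →₀ K}
    (hc : c ∈ Pc K g (m ⊔ g a) A i j) : ins K a c ∈ Pc K g m (insert a A) (i + 1) j := by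
  classical
  refine supp_ind (P := fun c => ins K a c ∈ Pc K g m (insert a A) (i + 1) j) ?_ ?_ ?_ hc
  · simp
  · intro x y hx hy
    rw [map_add]; exact Submodule.add_mem _ hx hy
  · intro T hT r
    rw [ins_single]
    apply Submodule.smul_mem
    refine Finsupp.single_mem_supported K _ ⟨Finset.insert_subset_insert _ hT.1, ?_, ?_⟩
    · rw [Finset.card_insert_of_notMem (fun h => haA (hT.1 h)), hT.2.1]
    · rw [sup_insert']; exact hT.2.2

lemma Pc_mono {A B : Finset (Fin k)} (h : A ⊆ B) {i j : ℕ} :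
    Pc K g m A i j ≤ Pc K g m B i j :=
  Finsupp.supported_mono fun _ hT => ⟨hT.1.trans h, hT.2⟩

lemma Pc_free (a : Fin k) {A : Finset (Fin k)} (haA : a ∉ A) {i j : ℕ} :
    Pc K g m A i j ≤ Finsupp.supported K K {T : Finset (Fin k) | a ∉ T} :=
  Finsupp.supported_mono fun _ hT h => haA (hT.1 h)

lemma decomp (a : Fin k) {A : Finset (Fin k)} {i j : ℕ}
    {c : Finset (Fin k) →₀ K} (hc : c ∈ Pc K g m (insert a A) (i + 1) j) :
    ∃ x ∈ Pc K g m A (i + 1) j, ∃ y ∈ Pc K g (m ⊔ g a) A i j, c = x + ins K a y := by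
  classical
  refine supp_ind (P := fun c => ∃ x ∈ Pc K g m A (i + 1) j,
    ∃ y ∈ Pc K g (m ⊔ g a) A i j, c = x + ins K a y) ?_ ?_ ?_ hc
  · exact ⟨0, Submodule.zero_mem _, 0, Submodule.zero_mem _, by simp⟩
  · rintro _ _ ⟨x, hx, y, hy, rfl⟩ ⟨x', hx', y', hy', rfl⟩
    refine ⟨x + x', Submodule.add_mem _ hx hx', y + y', Submodule.add_mem _ hy hy', ?_⟩
    rw [map_add]; abel
  · rintro T ⟨h1, h2, h3⟩ r
    by_cases haT : a ∈ T
    · refine ⟨0, Submodule.zero_mem _, Finsupp.single (T.erase a) (r * sg K a (T.erase a)), ?_, ?_⟩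
      · refine Finsupp.single_mem_supported K _ ⟨?_, ?_, ?_⟩
        · rw [Finset.subset_insert_iff] at h1; exact h1
        · rw [Finset.card_erase_of_mem haT, h2]; rfl
        · rw [← sup_insert', Finset.insert_erase haT]; exact h3
      · rw [ins_single, Finset.insert_erase haT]
        simp [mul_assoc, sg_sq]
    · refine ⟨Finsupp.single T r, ?_, 0, Submodule.zero_mem _, by simp⟩
      refine Finsupp.single_mem_supported K _ ⟨?_, h2, h3⟩
      exact (Finset.subset_insert_iff_of_notMem haT).1 h1

/-- (a) -/
lemma van_insert (a : Fin k) {A : Finset (Fin k)} (haA : a ∉ A) {i j : ℕ}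
    (h1 : Van K g m A (i + 1) j) (h2 : Van K g (m ⊔ g a) A i j) :
    Van K g m (insert a A) (i + 1) j := by
  intro c hc hDc
  obtain ⟨x, hx, y, hy, rfl⟩ := decomp g m a hc
  have fx := Pc_free g m a haA hx
  have fy := Pc_free g _ a haA hy
  have e : (D g m x + pr g m a y) + ins K a (-(D g (m ⊔ g a) y)) = 0 + ins K a 0 := by
    rw [map_add, ins_D g m a fy] at hDc
    rw [map_zero, add_zero, ← hDc, map_neg]; abel
  obtain ⟨e1, e2⟩ := split_unique a (Submodule.add_mem _ (D_free g m a fx) (pr_mem g m a fy))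
    (Submodule.neg_mem _ (D_free g _ a fy)) (Submodule.zero_mem _) (Submodule.zero_mem _) e
  obtain ⟨d, hd, rfl⟩ := h2 y hy (neg_eq_zero.1 e2)
  obtain ⟨w, hw, hDw⟩ := h1 (x + pr g m a d) (Submodule.add_mem _ hx (pr_Pc g m a hd))
    (by rw [map_add, pr_D, e1])
  refine ⟨w - ins K a d, Submodule.sub_mem _ (Pc_mono g m (Finset.subset_insert _ _) hw)
    (ins_Pc g m a haA hd), ?_⟩
  rw [map_sub, hDw, ins_D g m a (Pc_free g _ a haA hd)]; abel

/-- (b) -/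
lemma van_of_insert (a : Fin k) {A : Finset (Fin k)} (haA : a ∉ A) {i j : ℕ}
    (h1 : Van K g m (insert a A) i j) (h2 : Van K g (m ⊔ g a) A i j) :
    Van K g m A i j := by
  intro c hc hDc
  obtain ⟨c', hc', hD⟩ := h1 c (Pc_mono g m (Finset.subset_insert _ _) hc) hDc
  obtain ⟨x, hx, y, hy, rfl⟩ := decomp g m a hc'
  have fx := Pc_free g m a haA hx
  have fy := Pc_free g _ a haA hy
  have e : (D g m x + pr g m a y) + ins K a (-(D g (m ⊔ g a) y)) = c + ins K a 0 := by
    rw [map_add, ins_D g m a fy] at hD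
    rw [map_zero, add_zero, ← hD, map_neg]; abel
  obtain ⟨e1, e2⟩ := split_unique a (Submodule.add_mem _ (D_free g m a fx) (pr_mem g m a fy))
    (Submodule.neg_mem _ (D_free g _ a fy)) (Pc_free g m a haA hc) (Submodule.zero_mem _) e
  obtain ⟨d, hd, rfl⟩ := h2 y hy (neg_eq_zero.1 e2)
  exact ⟨x + pr g m a d, Submodule.add_mem _ hx (pr_Pc g m a hd), by rw [map_add, pr_D, e1]⟩

lemma pr_id (a : Fin k) (h : g a ≤ m) (c : Finset (Fin k) →₀ K) : pr g m a c = c := by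
  classical
  induction c using Finsupp.induction_linear with
  | zero => simp
  | add x y hx hy => simp only [map_add, hx, hy]
  | single T r => rw [pr_single, if_pos (by rw [sup_eq_left.2 h])]; simp

/-- (c) -/
lemma van_unit (b : Fin k) {A : Finset (Fin k)} (hb : b ∈ A) (h : g b ≤ m) (i j : ℕ) :
    Van K g m A i j := by
  have hm : m ⊔ g b = m := sup_eq_left.2 h
  obtain ⟨A', hbA, rfl⟩ : ∃ A', b ∉ A' ∧ insert b A' = A :=
    ⟨A.erase b, Finset.notMem_erase _ _, Finset.insert_erase hb⟩
  intro c hc hDc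
  have key : ∃ x ∈ Pc K g m A' i j, ∃ y ∈ Finsupp.supported K K {T : Finset (Fin k) | b ∉ T},
      c = x + ins K b y := by
    cases i with
    | zero =>
      refine ⟨c, ?_, 0, Submodule.zero_mem _, by simp⟩
      refine Finsupp.supported_mono ?_ hc
      rintro T ⟨h1, h2, h3⟩
      refine ⟨?_, h2, h3⟩
      rw [Finset.card_eq_zero.1 h2]; exact Finset.empty_subset _
    | succ i =>
      obtain ⟨x, hx, y, hy, e⟩ := decomp g m b hc
      exact ⟨x, hx, y, Pc_free g _ b hbA hy, e⟩
  obtain ⟨x, hx, y, fy, rfl⟩ := key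
  have fx := Pc_free g m b hbA hx
  have e : (D g m x + y) + ins K b (-(D g m y)) = 0 + ins K b 0 := by
    rw [map_add, ins_D g m b fy, pr_id g m b h, hm] at hDc
    rw [map_zero, add_zero, ← hDc, map_neg]; abel
  obtain ⟨e1, e2⟩ := split_unique b (Submodule.add_mem _ (D_free g m b fx) fy)
    (Submodule.neg_mem _ (D_free g _ b fy)) (Submodule.zero_mem _) (Submodule.zero_mem _) e
  refine ⟨ins K b x, ins_Pc g m b hbA (by rw [hm]; exact hx), ?_⟩
  rw [ins_D g m b fx, pr_id g m b h, hm, eq_neg_of_add_eq_zero_right e1, map_neg]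
  abel

/-- descending lemma -/
lemma van_descend {A B : Finset (Fin k)} (hBA : B ⊆ A) {i j : ℕ}
    (h : ∀ a ∈ A, a ∉ B → ∀ A', B ⊆ A' → A' ⊆ A → a ∉ A' → Van K g (m ⊔ g a) A' i j)
    (hA : Van K g m A i j) : Van K g m B i j := by
  induction hn : (A \ B).card generalizing A with
  | zero =>
    have : A = B := Finset.Subset.antisymm
      (Finset.sdiff_eq_empty_iff_subset.1 (Finset.card_eq_zero.1 hn)) hBA
    exact this ▸ hA
  | succ n ih =>
    obtain ⟨a, ha⟩ := Finset.card_pos.1 (by omega : 0 < (A \ B).card)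
    have ha' := Finset.mem_sdiff.1 ha
    have hB' : B ⊆ A.erase a := Finset.subset_erase.2 ⟨hBA, ha'.2⟩
    refine ih hB' (fun a' h1 h2 A' h3 h4 h5 => h a' (Finset.mem_of_mem_erase h1) h2 A' h3
      (h4.trans (Finset.erase_subset _ _)) h5) ?_ ?_
    · refine van_of_insert g m a (Finset.notMem_erase _ _) ?_
        (h a ha'.1 ha'.2 _ hB' (Finset.erase_subset _ _) (Finset.notMem_erase _ _))
      rwa [Finset.insert_erase ha'.1]
    · rw [Finset.erase_sdiff_comm, Finset.card_erase_of_mem ha, hn]; rfl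

lemma van_ascend {A B : Finset (Fin k)} (hBA : B ⊆ A) {i j : ℕ}
    (h : ∀ a ∈ A, ∃ b ∈ B, g b ≤ m ⊔ g a)
    (hB : Van K g m B (i + 1) j) : Van K g m A (i + 1) j := by
  induction hn : (A \ B).card generalizing A with
  | zero =>
    have : A = B := Finset.Subset.antisymm
      (Finset.sdiff_eq_empty_iff_subset.1 (Finset.card_eq_zero.1 hn)) hBA
    exact this ▸ hB
  | succ n ih =>
    obtain ⟨a, ha⟩ := Finset.card_pos.1 (by omega : 0 < (A \ B).card)
    have ha' := Finset.mem_sdiff.1 ha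
    have hB' : B ⊆ A.erase a := Finset.subset_erase.2 ⟨hBA, ha'.2⟩
    rw [← Finset.insert_erase ha'.1]
    obtain ⟨b, hb, hle⟩ := h a ha'.1
    refine van_insert g m a (Finset.notMem_erase _ _) (ih hB' 
      (fun a' h1 => h a' (Finset.mem_of_mem_erase h1)) ?_) (van_unit g _ b (hB' hb) hle _ _)
    rw [Finset.erase_sdiff_comm, Finset.card_erase_of_mem ha, hn]; rfl

lemma deg_add (p q : V →₀ ℕ) : monomialDegree (p + q) = monomialDegree p + monomialDegree q :=
  Finsupp.sum_add_index' (fun _ => rfl) (fun _ _ _ => rfl)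

/-- (d) -/
lemma van_vars {A : Finset (Fin k)} {i j : ℕ}
    (h : ∀ a ∈ A, ∃ b ∈ A, ∃ w : V, m ⊔ g b = m + Finsupp.single w 1 ∧ g b ≤ m ⊔ g a)
    (hij : j ≠ monomialDegree m + (i + 1)) : Van K g m A (i + 1) j := by
  classical
  let W : Set V := {w | ∃ b ∈ A, m ⊔ g b = m + Finsupp.single w 1}
  have hW : ∀ w : W, ∃ b ∈ A, m ⊔ g b = m + Finsupp.single w.1 1 := fun w => w.2
  choose β hβA hβ using hW
  let B : Finset (Fin k) := A.filter fun b => ∃ w, β w = b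
  have hBω : ∀ b ∈ B, ∃ w, m ⊔ g b = m + Finsupp.single w 1 := by
    intro b hb
    obtain ⟨w, rfl⟩ := (Finset.mem_filter.1 hb).2
    exact ⟨w.1, hβ w⟩
  refine van_ascend g m (B := B) (Finset.filter_subset _ _) ?_ ?_
  · intro a ha
    obtain ⟨b, hb, w, hw, hle⟩ := h a ha
    refine ⟨β ⟨w, b, hb, hw⟩, Finset.mem_filter.2 ⟨hβA _, _, rfl⟩, ?_⟩
    calc g (β ⟨w, b, hb, hw⟩) ≤ m ⊔ g (β ⟨w, b, hb, hw⟩) := le_sup_right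
      _ = m ⊔ g b := (hβ ⟨w, b, hb, hw⟩).trans hw.symm
      _ ≤ m ⊔ g a := sup_le le_sup_left hle
  · have key : ∀ T : Finset (Fin k), T ⊆ B → ∃ s : V →₀ ℕ, m ⊔ T.sup g = m + s ∧
        monomialDegree s = T.card ∧
        ∀ w : W, β w ∉ T → s w.1 = 0 := by
      intro T
      induction T using Finset.induction_on with
      | empty => exact fun _ => ⟨0, by simp, by simp [monomialDegree], by simp⟩
      | insert b T hbT ih =>
        intro hT
        obtain ⟨s, h1, h2, h3⟩ := ih ((Finset.subset_insert _ _).trans hT)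
        obtain ⟨w, rfl⟩ := (Finset.mem_filter.1 (hT (Finset.mem_insert_self _ _))).2
        refine ⟨s + Finsupp.single w.1 1, ?_, ?_, ?_⟩
        · have : m ⊔ (insert (β w) T).sup g = (m ⊔ g (β w)) ⊔ (m ⊔ T.sup g) := by
            rw [Finset.sup_insert]
            rw [sup_sup_sup_comm, sup_idem]
          rw [this, h1, hβ]
          ext v
          have h4 := h3 w hbT
          by_cases hv : v = w.1
          · subst hv; simp [h4]
          · simp [Finsupp.single_apply, Ne.symm hv]
        · rw [deg_add, h2, Finset.card_insert_of_notMem hbT]; simp [monomialDegree]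
        · intro w' hw'
          rw [Finset.mem_insert, not_or] at hw'
          have hne : w.1 ≠ w'.1 := fun hh => hw'.1 (by rw [Subtype.ext hh])
          simp [h3 w' hw'.2, hne, Finsupp.single_apply]
    intro c hc _
    have : cells g m B (i + 1) j = ∅ := by
      ext T
      simp only [Set.mem_empty_iff_false, iff_false]
      rintro ⟨h1, h2, h3⟩
      obtain ⟨s, e1, e2, _⟩ := key T h1
      rw [e1, deg_add, e2, h2] at h3
      exact hij h3.symm
    unfold Pc at hc
    rw [this, Finsupp.supported_empty, Submodule.mem_bot] at hc
    exact ⟨0, Submodule.zero_mem _, by rw [hc, map_zero]⟩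

end

section
variable {V K : Type*} [Field K] {k n : ℕ}

lemma zsup (x : V →₀ ℕ) : (0 : V →₀ ℕ) ⊔ x = x := sup_eq_right.2 (zero_le (a := x))

lemma taylor_iff (f : Fin k → (V →₀ ℕ)) (i j : ℕ) :
    taylorHomologyNonzero (K := K) f i j ↔ ¬ Van K f 0 Finset.univ i j := by
  have hD : taylorDiff (K := K) f = D f 0 := by
    have hb : ∀ T, taylorBoundary (K := K) f T = bdry f 0 T := by
      intro T
      unfold taylorBoundary bdry taylorLcm
      apply Finset.sum_congr rfl
      intro t _
      by_cases h : (T.erase t).sup f = T.sup f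
      · rw [if_pos h, if_pos (by rw [zsup, zsup]; exact h)]
      · rw [if_neg h, if_neg (by rw [zsup, zsup]; exact h)]
    unfold taylorDiff D
    simp only [hb]
  have hP : ∀ i, taylorPiece (K := K) f i j = Pc K f 0 Finset.univ i j := by
    intro i
    unfold taylorPiece Pc
    rw [Finsupp.supported_eq_span_single]
    congr 1
    ext x
    simp only [cells, Set.mem_ofPred_eq, Set.mem_image, zsup, taylorLcm, Finset.subset_univ,
      true_and]
    constructor
    · rintro ⟨T, h1, h2, rfl⟩; exact ⟨T, ⟨h1, h2⟩, rfl⟩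
    · rintro ⟨T, ⟨h1, h2⟩, rfl⟩; exact ⟨T, h1, h2, rfl⟩
  unfold taylorHomologyNonzero Van
  rw [hD, hP, hP, not_iff_not]
  constructor
  · intro h c hc hDc
    exact h ⟨LinearMap.mem_ker.2 hDc, hc⟩
  · rintro h c ⟨h1, h2⟩
    exact h c h2 (LinearMap.mem_ker.1 h1)

lemma van_transfer (φ : Fin k ↪o Fin n) (g : Fin n → (V →₀ ℕ)) (m : V →₀ ℕ) (i j : ℕ) :
    Van K g m (Finset.univ.map φ.toEmbedding) i j ↔ Van K (fun t => g (φ t)) m Finset.univ i j := by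
  classical
  let Φ : (Finset (Fin k) →₀ K) →ₗ[K] (Finset (Fin n) →₀ K) :=
    Finsupp.lmapDomain K K (Finset.map φ.toEmbedding)
  have hΦ : ∀ T (r : K), Φ (Finsupp.single T r) = Finsupp.single (T.map φ.toEmbedding) r :=
    fun T r => Finsupp.mapDomain_single
  have hinj : Function.Injective Φ :=
    Finsupp.mapDomain_injective (Finset.map_injective φ.toEmbedding)
  have hsup : ∀ T : Finset (Fin k), (T.map φ.toEmbedding).sup g = T.sup fun t => g (φ t) := by
    intro T; rw [Finset.sup_map]; rfl
  have hcomm : ∀ c, D g m (Φ c) = Φ (D (fun t => g (φ t)) m c) := by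
    intro c
    induction c using Finsupp.induction_linear with
    | zero => simp
    | add x y hx hy => simp only [map_add, hx, hy]
    | single T r =>
      rw [hΦ, D_single, D_single, map_smul]
      congr 1
      unfold bdry
      rw [map_sum, Finset.sum_map]
      apply Finset.sum_congr rfl
      intro t ht
      have he : (T.map φ.toEmbedding).erase (φ.toEmbedding t) = (T.erase t).map φ.toEmbedding := by
        rw [Finset.map_erase]
      have hf : ((T.map φ.toEmbedding).filter fun s => s < φ.toEmbedding t).card
          = (T.filter fun s => s < t).card := by
        rw [Finset.filter_map, Finset.card_map]
        congr 1
        ext s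
        simp
      rw [he, hf, hsup, hsup]
      split_ifs
      · rw [map_smul, hΦ]
      · simp
  have hmem : ∀ i c, c ∈ Pc K (fun t => g (φ t)) m Finset.univ i j →
      Φ c ∈ Pc K g m (Finset.univ.map φ.toEmbedding) i j := by
    intro i c hc
    refine supp_ind (P := fun c => Φ c ∈ Pc K g m (Finset.univ.map φ.toEmbedding) i j)
      ?_ ?_ ?_ hc
    · simp
    · intro x y hx hy
      rw [map_add]; exact Submodule.add_mem _ hx hy
    · rintro T ⟨h1, h2, h3⟩ r
      rw [hΦ]
      refine Finsupp.single_mem_supported K _ ⟨Finset.map_subset_map.2 h1, ?_, ?_⟩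
      · rw [Finset.card_map, h2]
      · rw [hsup, h3]
  have hsurj : ∀ i c, c ∈ Pc K g m (Finset.univ.map φ.toEmbedding) i j →
      ∃ d ∈ Pc K (fun t => g (φ t)) m Finset.univ i j, Φ d = c := by
    intro i c hc
    refine supp_ind (P := fun c => ∃ d ∈ Pc K (fun t => g (φ t)) m Finset.univ i j, Φ d = c)
      ?_ ?_ ?_ hc
    · exact ⟨0, Submodule.zero_mem _, map_zero _⟩
    · rintro _ _ ⟨x, hx, rfl⟩ ⟨y, hy, rfl⟩
      exact ⟨x + y, Submodule.add_mem _ hx hy, map_add _ _ _⟩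
    · rintro T ⟨h1, h2, h3⟩ r
      obtain ⟨U, hU, rfl⟩ := Finset.subset_map_iff.1 h1
      refine ⟨Finsupp.single U r, Finsupp.single_mem_supported K _ ⟨hU, ?_, ?_⟩, hΦ _ _⟩
      · rw [Finset.card_map] at h2; exact h2
      · rw [hsup] at h3; exact h3
  constructor
  · intro h c hc hD
    obtain ⟨d, hd, hd'⟩ := h (Φ c) (hmem _ _ hc) (by rw [hcomm, hD, map_zero])
    obtain ⟨e, he, rfl⟩ := hsurj _ _ hd
    exact ⟨e, he, hinj (by rw [← hcomm, hd'])⟩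
  · intro h c hc hD
    obtain ⟨c, hc', rfl⟩ := hsurj _ _ hc
    obtain ⟨d, hd, rfl⟩ := h c hc' (hinj (by rw [← hcomm, hD, map_zero]))
    exact ⟨Φ d, hmem _ _ hd, hcomm d⟩

lemma mem_monomialSpan (f : Fin k → (V →₀ ℕ)) (p : V →₀ ℕ) :
    monomial p (1 : K) ∈ monomialSpan (K := K) f ↔ ∃ t, f t ≤ p := by
  classical
  unfold monomialSpan
  have : (Set.range fun i => monomial (f i) (1 : K)) =
      (fun s => monomial s (1 : K)) '' Set.range f := by
    rw [← Set.range_comp]; rfl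
  rw [this, mem_ideal_span_monomial_image]
  simp [support_monomial]

/-- independence of the generating family -/
lemma van_indep (f : Fin k → (V →₀ ℕ)) (e : Fin n → (V →₀ ℕ))
    (h : monomialSpan (K := K) f = monomialSpan e) (i j : ℕ)
    (hf : Van K f 0 Finset.univ (i + 1) j) : Van K e 0 Finset.univ (i + 1) j := by
  have h1 := (van_transfer (K := K) (Fin.castAddOrderEmb n : Fin k ↪o Fin (k + n))
    (Fin.append f e) 0 (i + 1) j).2 (by simpa using hf)
  have hself1 : ∀ t, ∃ s, f s ≤ e t := fun t => by
    rw [← mem_monomialSpan (K := K), h, mem_monomialSpan]; exact ⟨t, le_rfl⟩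
  have hself2 : ∀ t, ∃ s, e s ≤ f t := fun t => by
    rw [← mem_monomialSpan (K := K), ← h, mem_monomialSpan]; exact ⟨t, le_rfl⟩
  have h2 : Van K (Fin.append f e) 0 Finset.univ (i + 1) j := by
    refine van_ascend _ _ (Finset.subset_univ _) ?_ h1
    intro a _
    refine Fin.addCases (fun t => ?_) (fun t => ?_) a
    · exact ⟨Fin.castAdd n t, (Finset.mem_map.2 ⟨t, Finset.mem_univ _, rfl⟩), by rw [zsup]⟩
    · obtain ⟨s, hs⟩ := hself1 t
      exact ⟨Fin.castAdd n s, (Finset.mem_map.2 ⟨s, Finset.mem_univ _, rfl⟩), by rw [zsup]; simpa using hs⟩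
  have h3 := van_descend (Fin.append f e) 0 (B := Finset.univ.map
      (Fin.natAddOrderEmb k : Fin n ↪o Fin (k + n)).toEmbedding) (Finset.subset_univ _) ?_ h2
  · have := (van_transfer (K := K) (Fin.natAddOrderEmb k : Fin n ↪o Fin (k + n))
      (Fin.append f e) 0 (i + 1) j).1 h3
    simpa using this
  · intro a _ ha A' hA' _ _
    revert ha
    refine Fin.addCases (fun t => ?_) (fun t => ?_) a
    · intro _
      obtain ⟨s, hs⟩ := hself2 t
      refine van_unit _ _ (Fin.natAdd k s) (hA' (Finset.mem_map.2 ⟨s, Finset.mem_univ _, rfl⟩)) ?_ _ _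
      rw [zsup]; simpa using hs
    · intro ha; exact absurd (Finset.mem_map.2 ⟨t, Finset.mem_univ _, rfl⟩) ha

end

section
variable {V K : Type*} [Field K]

noncomputable def em (u v : V) : V →₀ ℕ := Finsupp.single u 1 + Finsupp.single v 1

lemma XX (u v : V) : (X u * X v : MvPolynomial V K) = monomial (em u v) 1 := by
  simp [X, em, monomial_mul]

lemma exists_edge_gens [Fintype V] (G : SimpleGraph V) :
    ∃ (n : ℕ) (e : Fin n → (V →₀ ℕ)), edgeIdeal (K := K) G = monomialSpan e ∧
      (∀ t, ∃ u v, G.Adj u v ∧ e t = em u v) := by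
  classical
  let P := {p : V × V // G.Adj p.1 p.2}
  let q := Fintype.equivFin P
  refine ⟨Fintype.card P, fun t => em (q.symm t).1.1 (q.symm t).1.2, ?_, fun t =>
    ⟨_, _, (q.symm t).2, rfl⟩⟩
  unfold edgeIdeal monomialSpan
  congr 1
  ext p
  constructor
  · rintro ⟨u, v, h, rfl⟩
    exact ⟨q ⟨(u, v), h⟩, by simp [XX]⟩
  · rintro ⟨t, rfl⟩
    exact ⟨_, _, (q.symm t).2, by simp [XX]⟩

/-- the set whose supremum is the regularity is bounded -/
lemma bdd_of_span {n : ℕ} (I : Ideal (MvPolynomial V K)) (e : Fin n → (V →₀ ℕ))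
    (h : I = monomialSpan e) :
    BddAbove { d | ∃ i j : ℕ, IdealTorNonzero I i j ∧ d = j - i } := by
  classical
  refine ⟨∑ T : Finset (Fin n), monomialDegree (0 ⊔ T.sup e), ?_⟩
  rintro d ⟨i, j, ⟨k, f, hf, hne⟩, rfl⟩
  rw [taylor_iff] at hne
  by_contra hlt
  apply hne
  refine van_indep e f (h.symm.trans hf) i j ?_
  intro c hc _
  have : cells e 0 Finset.univ (i + 1) j = ∅ := by
    ext T
    simp only [Set.mem_empty_iff_false, iff_false]
    rintro ⟨-, -, h3⟩
    have := Finset.single_le_sum (f := fun T : Finset (Fin n) => monomialDegree (0 ⊔ T.sup e))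
      (fun _ _ => Nat.zero_le _) (Finset.mem_univ T)
    omega
  unfold Pc at hc
  rw [this, Finsupp.supported_empty, Submodule.mem_bot] at hc
  exact ⟨0, Submodule.zero_mem _, by rw [hc, map_zero]⟩

lemma path_mono (G : SimpleGraph V) {a b c : V} (h1 : G.Adj a b) (h2 : G.Adj b c) (h3 : a ≠ c) :
    monomial (em a b + Finsupp.single c 1) (1 : K) ∈ pathIdeal (K := K) G 3 := by
  apply Ideal.subset_span
  refine ⟨[a, b, c], ⟨?_, ?_⟩, rfl, ?_⟩
  · simp [List.Chain', h1, h2]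
  · simp [h1.ne, h2.ne, h3]
  · simp [X, em, monomial_mul, add_assoc]

lemma path_cases (G : SimpleGraph V) {p : V →₀ ℕ}
    (h : monomial p (1 : K) ∈ pathIdeal (K := K) G 3) :
    ∃ a b c, G.Adj a b ∧ G.Adj b c ∧ a ≠ c ∧ em a b + Finsupp.single c 1 ≤ p := by
  classical
  have : pathIdeal (K := K) G 3 = Ideal.span ((fun s => monomial s (1 : K)) ''
      {s | ∃ a b c, G.Adj a b ∧ G.Adj b c ∧ a ≠ c ∧ s = em a b + Finsupp.single c 1}) := by
    unfold pathIdeal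
    congr 1
    ext q
    constructor
    · rintro ⟨l, ⟨h1, h2⟩, h3, rfl⟩
      obtain ⟨a, b, c, rfl⟩ := List.length_eq_three.1 h3
      simp [List.Chain'] at h1 h2
      exact ⟨_, ⟨a, b, c, h1.1, h1.2, h2.1.2, rfl⟩, by simp [X, em, monomial_mul, add_assoc]⟩
    · rintro ⟨_, ⟨a, b, c, h1, h2, h3, rfl⟩, rfl⟩
      refine ⟨[a, b, c], ⟨?_, ?_⟩, rfl, ?_⟩
      · simp [List.Chain', h1, h2]
      · simp [h1.ne, h2.ne, h3]
      · simp [X, em, monomial_mul, add_assoc]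
  rw [this, mem_ideal_span_monomial_image] at h
  obtain ⟨s, ⟨a, b, c, h1, h2, h3, rfl⟩, hs⟩ := h p (by simp [support_monomial])
  exact ⟨a, b, c, h1, h2, h3, hs⟩

lemma path_le_edge (G : SimpleGraph V) : pathIdeal (K := K) G 3 ≤ edgeIdeal G := by
  unfold pathIdeal
  rw [Ideal.span_le]
  rintro _ ⟨l, ⟨h1, h2⟩, h3, rfl⟩
  obtain ⟨a, b, c, rfl⟩ := List.length_eq_three.1 h3
  simp [List.Chain'] at h1 h2
  have : X a * X b ∈ edgeIdeal (K := K) G := Ideal.subset_span ⟨a, b, h1.1, rfl⟩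
  simpa [mul_assoc] using Ideal.mul_mem_right (X c) _ this

/-- an edge different from `uv` contains a vertex that extends `uv` to a 3-path -/
lemma extend (G : SimpleGraph V) (hgap : G.GapFree) {u v a b : V} (huv : G.Adj u v)
    (hab : G.Adj a b) (hne : ¬ ((a = u ∨ a = v) ∧ (b = u ∨ b = v))) :
    ∃ w, (w = a ∨ w = b) ∧ w ≠ u ∧ w ≠ v ∧ (G.Adj u w ∨ G.Adj v w) := by
  by_cases ha : a = u ∨ a = v
  · have hb : ¬ (b = u ∨ b = v) := fun h => hne ⟨ha, h⟩
    push Not at hb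
    refine ⟨b, Or.inr rfl, hb.1, hb.2, ?_⟩
    rcases ha with rfl | rfl
    · exact Or.inl hab
    · exact Or.inr hab
  · push Not at ha
    by_cases hb : b = u ∨ b = v
    · refine ⟨a, Or.inl rfl, ha.1, ha.2, ?_⟩
      rcases hb with rfl | rfl
      · exact Or.inl hab.symm
      · exact Or.inr hab.symm
    · push Not at hb
      rcases hgap u v a b huv hab ha.1.symm hb.1.symm ha.2.symm hb.2.symm with h | h | h | h
      · exact ⟨a, Or.inl rfl, ha.1, ha.2, Or.inl h⟩
      · exact ⟨b, Or.inr rfl, hb.1, hb.2, Or.inl h⟩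
      · exact ⟨a, Or.inl rfl, ha.1, ha.2, Or.inr h⟩
      · exact ⟨b, Or.inr rfl, hb.1, hb.2, Or.inr h⟩

lemma path_mono' (G : SimpleGraph V) {u v w : V} (huv : G.Adj u v) (h1 : w ≠ u) (h2 : w ≠ v)
    (h : G.Adj u w ∨ G.Adj v w) :
    monomial (em u v + Finsupp.single w 1) (1 : K) ∈ pathIdeal (K := K) G 3 := by
  rcases h with h | h
  · have := path_mono (K := K) G huv.symm h h2.symm
    rwa [em, add_comm (Finsupp.single v 1)] at this
  · exact path_mono G huv h h1.symm

lemma deg_em (u v : V) : monomialDegree (em u v) = 2 := by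
  rw [em, deg_add]; simp [monomialDegree]

lemma em_sup_ge {u v w : V} {p : V →₀ ℕ} (h1 : w ≠ u) (h2 : w ≠ v) (h : 1 ≤ p w) :
    em u v + Finsupp.single w 1 ≤ em u v ⊔ p := by
  classical
  intro x
  by_cases hx : x = w
  · subst hx
    simp [em, h1.symm, h2.symm, h]
  · simp [em, Ne.symm hx]

lemma sup_eq_of {q f : V →₀ ℕ} {w : V} (h1 : f ≤ q + Finsupp.single w 1) (h2 : ¬ f ≤ q) :
    q ⊔ f = q + Finsupp.single w 1 := by
  classical
  refine le_antisymm (sup_le le_self_add h1) ?_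
  have h3 : q w < f w := by
    by_contra hh
    apply h2
    intro x
    by_cases hx : x = w
    · subst hx; omega
    · have := h1 x
      simpa [Ne.symm hx] using this
  intro x
  by_cases hx : x = w
  · subst hx
    simp; omega
  · simp [Ne.symm hx]

end

end TaylorAux

/-- If `G` is a finite simple gap-free graph with `I_3(G) ≠ 0` and
`reg (I(G)) = r`, then `reg (I_3(G)) ≤ max {r, 3}`. -/
theorem stmt1 {V K : Type*} [Fintype V] [Field K] (G : SimpleGraph V)
    (hgap : G.GapFree) (h3 : pathIdeal (K := K) G 3 ≠ ⊥) (r : ℕ)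
    (hr : reg (edgeIdeal (K := K) G) = r) :
    reg (pathIdeal (K := K) G 3) ≤ max r 3 := by
  classical
  obtain ⟨n, e, hE, he⟩ := TaylorAux.exists_edge_gens (K := K) G
  have hbdd := TaylorAux.bdd_of_span (edgeIdeal (K := K) G) e hE
  refine csSup_le' ?_
  rintro d ⟨i, j, ⟨k, f, hf, hne⟩, rfl⟩
  by_contra hlt
  rw [not_le, max_lt_iff] at hlt
  rw [TaylorAux.taylor_iff] at hne
  apply hne
  -- the combined family
  have hspan : edgeIdeal (K := K) G = monomialSpan (Fin.append f e) := by
    apply le_antisymm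
    · rw [hE]
      unfold monomialSpan
      apply Ideal.span_mono
      rintro _ ⟨t, rfl⟩
      exact ⟨Fin.natAdd k t, by simp⟩
    · unfold monomialSpan
      rw [Ideal.span_le]
      rintro _ ⟨t, rfl⟩
      refine Fin.addCases (fun t => ?_) (fun t => ?_) t
      · apply TaylorAux.path_le_edge G
        rw [hf]
        exact Ideal.subset_span ⟨t, by simp⟩
      · rw [hE]
        exact Ideal.subset_span ⟨t, by simp⟩
  have h1 : TaylorAux.Van K (Fin.append f e) 0 Finset.univ (i + 1) j := by
    by_contra hcon
    have : j - i ≤ reg (edgeIdeal (K := K) G) :=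
      le_csSup hbdd ⟨i, j, ⟨_, _, hspan, (TaylorAux.taylor_iff _ _ _).2 hcon⟩, rfl⟩
    omega
  have h2 := TaylorAux.van_descend (Fin.append f e) 0 (B := Finset.univ.map
      (Fin.castAddOrderEmb n : Fin k ↪o Fin (k + n)).toEmbedding) (Finset.subset_univ _) ?_ h1
  · have := (TaylorAux.van_transfer (K := K) (Fin.castAddOrderEmb n : Fin k ↪o Fin (k + n))
      (Fin.append f e) 0 (i + 1) j).1 h2
    simpa using this
  intro a _ ha A' hA' _ _
  revert ha
  refine Fin.addCases (fun t => ?_) (fun t => ?_) a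
  · intro ha; exact absurd (Finset.mem_map.2 ⟨t, Finset.mem_univ _, rfl⟩) ha
  intro _
  rw [TaylorAux.zsup, Fin.append_right]
  obtain ⟨u, v, huv, het⟩ := he t
  rw [het]
  by_cases hunit : ∃ b ∈ A', Fin.append f e b ≤ TaylorAux.em u v
  · obtain ⟨b, hb, hle⟩ := hunit
    exact TaylorAux.van_unit _ _ b hb hle _ _
  refine TaylorAux.van_vars _ _ ?_ (by rw [TaylorAux.deg_em]; omega)
  intro c hc
  -- it suffices to find an edge other than `uv` below the generator
  have key : ∃ p q, G.Adj p q ∧ ¬ ((p = u ∨ p = v) ∧ (q = u ∨ q = v)) ∧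
      TaylorAux.em p q ≤ Fin.append f e c := by
    revert hc
    refine Fin.addCases (fun s => ?_) (fun s => ?_) c
    · intro _
      rw [Fin.append_left]
      have hm : monomial (f s) (1 : K) ∈ pathIdeal (K := K) G 3 := by
        rw [hf]; exact Ideal.subset_span ⟨s, rfl⟩
      obtain ⟨x, y, z, hxy, hyz, hxz, hle⟩ := TaylorAux.path_cases G hm
      by_cases hc : (x = u ∨ x = v) ∧ (y = u ∨ y = v)
      · refine ⟨y, z, hyz, ?_, le_trans ?_ hle⟩
        · rintro ⟨-, h⟩
          have := hxy.ne
          have := hyz.ne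
          rcases hc with ⟨rfl | rfl, rfl | rfl⟩ <;> rcases h with rfl | rfl <;> simp_all
        · unfold TaylorAux.em
          rw [add_assoc]; exact le_add_self
      · exact ⟨x, y, hxy, hc, le_trans le_self_add hle⟩
    · intro hs
      obtain ⟨p, q, hpq, hes⟩ := he s
      refine ⟨p, q, hpq, ?_, by rw [Fin.append_right, hes]⟩
      intro h
      apply hunit
      refine ⟨_, hs, ?_⟩
      rw [Fin.append_right, hes]
      have := hpq.ne
      rcases h with ⟨rfl | rfl, rfl | rfl⟩
      · exact absurd rfl this
      · exact le_rfl
      · exact (add_comm _ _).le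
      · exact absurd rfl this
  obtain ⟨p, q, hpq, hne', hle⟩ := key
  obtain ⟨w, hw, hwu, hwv, hadj⟩ := TaylorAux.extend G hgap huv hpq hne'
  have hcw : 1 ≤ Fin.append f e c w := by
    refine le_trans ?_ (hle w)
    rcases hw with rfl | rfl <;> simp [TaylorAux.em]
  have hm := TaylorAux.path_mono' (K := K) G huv hwu hwv hadj
  rw [hf, TaylorAux.mem_monomialSpan] at hm
  obtain ⟨s, hs⟩ := hm
  have hsA : Fin.castAdd n s ∈ A' := hA' (Finset.mem_map.2 ⟨s, Finset.mem_univ _, rfl⟩)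
  refine ⟨Fin.castAdd n s, hsA, w, ?_, ?_⟩
  · refine TaylorAux.sup_eq_of (by simpa using hs) ?_
    exact fun h => hunit ⟨_, hsA, h⟩
  · rw [Fin.append_left]
    exact hs.trans (TaylorAux.em_sup_ge hwu hwv hcw)
end

section
/- Let G be a finite simple gap-free graph with nonzero 4-path ideal I_4(G). If the minimal free resolution of the edge ideal I(G) is linear up to step p for some p ≥ 2 (that is, Tor_i^S(I(G),K)_j = 0 for all 1 ≤ i ≤ p and all j ≠ i + 2), then the minimal free resolution of I_4(G) is linear up to step p (that is, Tor_i^S(I_4(G),K)_j = 0 for all 1 ≤ i ≤ p and all j ≠ i + 4). In particular, if I(G) has a linear minimal free resolution, then so does I_4(G). -/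
open MvPolynomial

namespace PathLin

set_option linter.unusedSectionVars false

section Generic
variable {ι K : Type*} [Fintype ι] [DecidableEq ι] [Field K]

def eps (K : Type*) [Field K] (r : ι → ℕ) (t : ι) (S : Finset ι) : K :=
  (-1) ^ ((S.filter (fun s => r s < r t)).card)

def bd (r : ι → ℕ) (z : Finset ι → K) (S : Finset ι) : K :=
  ∑ t ∈ Sᶜ, eps K r t S * z (insert t S)

/-- exactness of the complex of a family of finsets -/
def Ex (K : Type*) [Field K] (r : ι → ℕ) (P : Finset ι → Prop) (n : ℕ) : Prop :=
  ∀ z : Finset ι → K, (∀ T, z T ≠ 0 → P T ∧ T.card = n) → (∀ S, P S → bd r z S = 0) →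
    ∃ w : Finset ι → K, (∀ T, w T ≠ 0 → P T ∧ T.card = n + 1) ∧ ∀ S, P S → bd r w S = z S

def Conv (P : Finset ι → Prop) : Prop :=
  ∀ A B C : Finset ι, A ⊆ B → B ⊆ C → P A → P C → P B

lemma eps_sq (r : ι → ℕ) (t : ι) (S : Finset ι) : eps K r t S * eps K r t S = 1 := by
  unfold eps
  rw [← mul_pow]; simp

lemma eps_insert (r : ι → ℕ) (t v : ι) (S : Finset ι) (hv : v ∉ S) :
    eps K r t (insert v S) = (if r v < r t then -1 else 1) * eps K r t S := by
  unfold eps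
  rw [Finset.filter_insert]
  split_ifs with h
  · rw [Finset.card_insert_of_notMem (by simp [hv]), pow_succ]; ring
  · simp

lemma eps_swap (r : ι → ℕ) (hr : Function.Injective r) (t v : ι) (S : Finset ι)
    (htv : t ≠ v) (ht : t ∉ S) (hv : v ∉ S) :
    eps K r t (insert v S) * eps K r v (insert t S) = - (eps K r t S * eps K r v S) := by
  rw [eps_insert r t v S hv, eps_insert r v t S ht]
  have : r t ≠ r v := fun h => htv (hr h)
  rcases lt_or_gt_of_ne this with h | h
  · simp [h, h.not_gt]
  · simp [h, h.not_gt]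

lemma eps_swap' (r : ι → ℕ) (hr : Function.Injective r) (t v : ι) (S : Finset ι)
    (htv : t ≠ v) (ht : t ∉ S) (hv : v ∉ S) :
    eps K r t S * eps K r v (insert t S) = - (eps K r t (insert v S) * eps K r v S) := by
  rw [eps_insert r t v S hv, eps_insert r v t S ht]
  have : r t ≠ r v := fun h => htv (hr h)
  rcases lt_or_gt_of_ne this with h | h
  · simp [h, h.not_gt]
  · simp [h, h.not_gt]

lemma bd_bd (r : ι → ℕ) (hr : Function.Injective r) (z : Finset ι → K) (S : Finset ι) :
    bd r (bd r z) S = 0 := by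
  unfold bd
  simp_rw [Finset.mul_sum]
  rw [Finset.sum_sigma']
  refine Finset.sum_involution (fun a _ => ⟨a.2, a.1⟩) ?_ ?_ ?_ ?_
  · rintro ⟨t, s⟩ h
    simp only [Finset.mem_sigma, Finset.mem_compl, Finset.mem_insert, not_or] at h
    obtain ⟨h1, h2, h3⟩ := h
    dsimp only
    rw [Finset.insert_comm s t S]
    have := eps_swap' (K := K) r hr t s S (Ne.symm h2) h1 h3
    linear_combination z (insert t (insert s S)) * this
  · rintro ⟨t, s⟩ h _ h'
    simp only [Finset.mem_sigma, Finset.mem_compl, Finset.mem_insert, not_or] at h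
    simp only [Sigma.mk.injEq] at h'
    exact h.2.1 h'.1
  · rintro ⟨t, s⟩ h
    simp only [Finset.mem_sigma, Finset.mem_compl, Finset.mem_insert, not_or] at h ⊢
    exact ⟨h.2.2, fun h' => h.2.1 h'.symm, h.1⟩
  · rintro ⟨t, s⟩ h
    rfl

lemma bd_add (r : ι → ℕ) (z w : Finset ι → K) (S : Finset ι) :
    bd r (fun T => z T + w T) S = bd r z S + bd r w S := by
  unfold bd
  rw [← Finset.sum_add_distrib]
  exact Finset.sum_congr rfl fun _ _ => by ring

lemma bd_sub (r : ι → ℕ) (z w : Finset ι → K) (S : Finset ι) :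
    bd r (fun T => z T - w T) S = bd r z S - bd r w S := by
  unfold bd
  rw [← Finset.sum_sub_distrib]
  exact Finset.sum_congr rfl fun _ _ => by ring

lemma bd_congr (r : ι → ℕ) (z w : Finset ι → K) (S : Finset ι)
    (h : ∀ t, t ∉ S → z (insert t S) = w (insert t S)) : bd r z S = bd r w S := by
  unfold bd
  exact Finset.sum_congr rfl fun t ht => by rw [h t (by simpa using ht)]

lemma bd_zero (r : ι → ℕ) (z : Finset ι → K) (S : Finset ι)
    (h : ∀ t, t ∉ S → z (insert t S) = 0) : bd r z S = 0 := by
  unfold bd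
  exact Finset.sum_eq_zero fun t ht => by rw [h t (by simpa using ht), mul_zero]

lemma bd_ne (r : ι → ℕ) (z : Finset ι → K) (S : Finset ι) (h : bd r z S ≠ 0) :
    ∃ t, t ∉ S ∧ z (insert t S) ≠ 0 := by
  by_contra! hc
  exact h (bd_zero r z S hc)

open Classical in
/-- restriction of a function to a family -/
noncomputable def res (P : Finset ι → Prop) (z : Finset ι → K) : Finset ι → K :=
  fun T => if P T then z T else 0

lemma res_pos {P : Finset ι → Prop} {z : Finset ι → K} {T : Finset ι} (h : P T) :
    res P z T = z T := by simp [res, h]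
lemma res_neg {P : Finset ι → Prop} {z : Finset ι → K} {T : Finset ι} (h : ¬ P T) :
    res P z T = 0 := by simp [res, h]
lemma res_ne {P : Finset ι → Prop} {z : Finset ι → K} {T : Finset ι} (h : res P z T ≠ 0) :
    P T ∧ z T ≠ 0 := by
  by_cases hP : P T
  · rw [res_pos hP] at h; exact ⟨hP, h⟩
  · exact absurd (res_neg hP) h

lemma bd_res_bd (r : ι → ℕ) (hr : Function.Injective r) {P : Finset ι → Prop} (hP : Conv P)
    (w : Finset ι → K) (hw : ∀ T, w T ≠ 0 → P T) (S : Finset ι) (hS : P S) :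
    bd r (res P (bd r w)) S = 0 := by
  rw [← bd_bd r hr w S]
  apply bd_congr
  intro t ht
  by_cases h : P (insert t S)
  · rw [res_pos h]
  · rw [res_neg h]
    by_contra h2
    obtain ⟨s, hs, hs2⟩ := bd_ne r w _ (Ne.symm h2)
    exact h (hP S _ _ (Finset.subset_insert _ _) (Finset.subset_insert _ _) hS (hw _ hs2))

/-- hypotheses of a splitting -/
structure Split (P A B : Finset ι → Prop) : Prop where
  conv : Conv P
  a : ∀ T, A T → P T
  b : ∀ T, B T → P T
  or : ∀ T, P T → A T ∨ B T
  down : ∀ S T, S ⊆ T → A T → B S → False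

lemma Split.notB {P A B : Finset ι → Prop} (h : Split P A B) {T} (hA : A T) : ¬ B T :=
  fun hB => h.down T T (Finset.Subset.refl _) hA hB

lemma Split.bd_resB {P A B : Finset ι → Prop} (h : Split P A B) (r : ι → ℕ)
    (z : Finset ι → K) (hz : ∀ T, z T ≠ 0 → P T) (S) (hS : B S) :
    bd r (res B z) S = bd r z S := by
  apply bd_congr
  intro t ht
  by_cases hB : B (insert t S)
  · rw [res_pos hB]
  · rw [res_neg hB]
    by_contra h2
    rcases h.or _ (hz _ (Ne.symm h2)) with h3 | h3
    · exact h.down _ _ (Finset.subset_insert _ _) h3 hS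
    · exact hB h3

lemma Split.bdA {P A B : Finset ι → Prop} (h : Split P A B) (r : ι → ℕ)
    (z : Finset ι → K) (hz : ∀ T, z T ≠ 0 → A T) (S) (hS : B S) :
    bd r z S = 0 := by
  apply bd_zero
  intro t ht
  by_contra h2
  exact h.down _ _ (Finset.subset_insert _ _) (hz _ h2) hS

lemma Ex.mid (r : ι → ℕ) (hr : Function.Injective r) {P A B : Finset ι → Prop}
    (h : Split P A B) {n : ℕ} (hA : Ex K r A n) (hB : Ex K r B n) : Ex K r P n := by
  intro z hz hz0
  obtain ⟨wB, hwB, hwB2⟩ := hB (res B z)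
    (fun T hT => ⟨(res_ne hT).1, (hz T (res_ne hT).2).2⟩)
    (fun S hS => by
      rw [h.bd_resB r z (fun T hT => (hz T hT).1) S hS]; exact hz0 S (h.b S hS))
  have hwBP : ∀ T, wB T ≠ 0 → P T := fun T hT => h.b T (hwB T hT).1
  obtain ⟨wA, hwA, hwA2⟩ := hA (fun T => z T - res P (bd r wB) T)
    (fun T hT => by
      have hPT : P T := by
        by_contra hP
        apply hT
        rw [res_neg hP, sub_zero]
        by_contra h2
        exact hP (hz T h2).1
      have hAT : A T := by
        rcases h.or T hPT with h1 | h1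
        · exact h1
        · exfalso; apply hT
          rw [res_pos hPT, hwB2 T h1, res_pos h1, sub_self]
      refine ⟨hAT, ?_⟩
      by_cases hzT : z T = 0
      · rw [hzT, zero_sub, neg_ne_zero] at hT
        obtain ⟨t, ht, ht2⟩ := bd_ne r wB T (res_ne hT).2
        have := (hwB _ ht2).2
        rw [Finset.card_insert_of_notMem ht] at this
        omega
      · exact (hz T hzT).2)
    (fun S hS => by
      rw [bd_sub, hz0 S (h.a S hS), bd_res_bd r hr h.conv wB hwBP S (h.a S hS), sub_zero])
  refine ⟨fun T => wA T + wB T, fun T hT => ?_, fun S hS => ?_⟩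
  · by_cases h1 : wA T = 0
    · have h2 : wB T ≠ 0 := by simpa [h1] using hT
      exact ⟨hwBP T h2, (hwB T h2).2⟩
    · exact ⟨h.a T (hwA T h1).1, (hwA T h1).2⟩
  · rw [bd_add]
    rcases h.or S hS with h1 | h1
    · rw [hwA2 S h1, res_pos hS]; ring
    · rw [h.bdA r wA (fun T hT => (hwA T hT).1) S h1, hwB2 S h1, res_pos h1, zero_add]

lemma Ex.sub (r : ι → ℕ) (hr : Function.Injective r) {P A B : Finset ι → Prop}
    (h : Split P A B) {n : ℕ} (hP : Ex K r P n) (hB : Ex K r B (n + 1)) : Ex K r A n := by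
  intro z hz hz0
  obtain ⟨w, hw, hw2⟩ := hP z (fun T hT => ⟨h.a T (hz T hT).1, (hz T hT).2⟩)
    (fun S hS => by
      rcases h.or S hS with h1 | h1
      · exact hz0 S h1
      · exact h.bdA r z (fun T hT => (hz T hT).1) S h1)
  obtain ⟨y, hy, hy2⟩ := hB (res B w)
    (fun T hT => ⟨(res_ne hT).1, (hw T (res_ne hT).2).2⟩)
    (fun S hS => by
      rw [h.bd_resB r w (fun T hT => (hw T hT).1) S hS, hw2 S (h.b S hS)]
      by_contra h2
      exact h.notB (hz S h2).1 hS)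
  have hyP : ∀ T, y T ≠ 0 → P T := fun T hT => h.b T (hy T hT).1
  refine ⟨fun T => w T - res P (bd r y) T, fun T hT => ?_, fun S hS => ?_⟩
  · dsimp only at hT
    have hPT : P T := by
      by_contra hP
      apply hT
      rw [res_neg hP, sub_zero]
      by_contra h2
      exact hP (hw T h2).1
    have hAT : A T := by
      rcases h.or T hPT with h1 | h1
      · exact h1
      · exfalso; apply hT
        rw [res_pos hPT, hy2 T h1, res_pos h1, sub_self]
    refine ⟨hAT, ?_⟩
    by_cases hzT : w T = 0
    · rw [hzT, zero_sub, neg_ne_zero] at hT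
      obtain ⟨t, ht, ht2⟩ := bd_ne r y T (res_ne hT).2
      have := (hy _ ht2).2
      rw [Finset.card_insert_of_notMem ht] at this
      omega
    · exact (hw T hzT).2
  · rw [bd_sub, hw2 S (h.a S hS), bd_res_bd r hr h.conv y hyP S (h.a S hS), sub_zero]

lemma Ex.quot (r : ι → ℕ) (hr : Function.Injective r) {P A B : Finset ι → Prop}
    (h : Split P A B) {n : ℕ} (hP : Ex K r P n) (hA : ∀ k, Ex K r A k) : Ex K r B n := by
  intro z hz hz0
  have hzP : ∀ T, z T ≠ 0 → P T := fun T hT => h.b T (hz T hT).1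
  have hres : ∀ S, P S → res A (bd r z) S = res P (bd r z) S := by
    intro S hS
    rw [res_pos hS]
    rcases h.or S hS with h1 | h1
    · rw [res_pos h1]
    · rw [hz0 S h1, res_neg (fun hA => h.notB hA h1)]
  obtain ⟨w, hw, hw2⟩ : ∃ w : Finset ι → K, (∀ T, w T ≠ 0 → A T ∧ T.card = n) ∧
      ∀ S, A S → bd r w S = bd r z S := by
    rcases n with _ | n
    · refine ⟨fun _ => 0, by simp, fun S hS => ?_⟩
      rw [bd_zero r _ _ (fun _ _ => rfl), bd_zero]
      intro t ht
      by_contra h2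
      have := (hz _ h2).2
      simp at this
    · obtain ⟨w, hw, hw2⟩ := hA n (res A (bd r z))
        (fun T hT => by
          refine ⟨(res_ne hT).1, ?_⟩
          obtain ⟨t, ht, ht2⟩ := bd_ne r z T (res_ne hT).2
          have := (hz _ ht2).2
          rw [Finset.card_insert_of_notMem ht] at this
          omega)
        (fun S hS => by
          rw [← bd_res_bd r hr h.conv z hzP S (h.a S hS)]
          apply bd_congr
          intro t ht
          by_cases hPt : P (insert t S)
          · exact hres _ hPt
          · rw [res_neg hPt, res_neg (fun hA => hPt (h.a _ hA))])
      exact ⟨w, hw, fun S hS => by rw [hw2 S hS, res_pos hS]⟩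
  obtain ⟨y, hy, hy2⟩ := hP (fun T => z T - w T)
    (fun T hT => by
      by_cases h1 : z T = 0
      · have h2 : w T ≠ 0 := by simpa [h1] using hT
        exact ⟨h.a T (hw T h2).1, (hw T h2).2⟩
      · exact ⟨hzP T h1, (hz T h1).2⟩)
    (fun S hS => by
      rw [bd_sub]
      rcases h.or S hS with h1 | h1
      · rw [hw2 S h1, sub_self]
      · rw [hz0 S h1, h.bdA r w (fun T hT => (hw T hT).1) S h1, sub_zero])
  refine ⟨res B y, fun T hT => ⟨(res_ne hT).1, (hy T (res_ne hT).2).2⟩, fun S hS => ?_⟩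
  rw [h.bd_resB r y (fun T hT => (hy T hT).1) S hS, hy2 S (h.b S hS)]
  have : w S = 0 := by
    by_contra h2
    exact h.notB (hw S h2).1 hS
  rw [this, sub_zero]

lemma Ex.congr {r : ι → ℕ} {P Q : Finset ι → Prop} {n : ℕ} (h : ∀ T, P T ↔ Q T)
    (hP : Ex K r P n) : Ex K r Q n := by
  have : P = Q := funext fun T => propext (h T)
  exact this ▸ hP

lemma Ex.empty {r : ι → ℕ} {P : Finset ι → Prop} {n : ℕ} (h : ∀ T, P T → T.card ≠ n) :
    Ex K r P n := by
  intro z hz _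
  refine ⟨fun _ => 0, by simp, fun S _ => ?_⟩
  rw [bd_zero r _ _ (fun _ _ => rfl)]
  by_contra h2
  have := hz S (Ne.symm h2)
  exact h S this.1 this.2

lemma Ex.toggle (r : ι → ℕ) (hr : Function.Injective r) {P : Finset ι → Prop} (v : ι)
    (hv : ∀ F, v ∉ F → (P F ↔ P (insert v F))) (n : ℕ) : Ex K r P n := by
  intro z hz hz0
  refine ⟨fun T => if v ∈ T then eps K r v (T.erase v) * z (T.erase v) else 0,
    fun T hT => ?_, fun S hS => ?_⟩
  · by_cases hvT : v ∈ T
    · simp only [hvT, if_true] at hT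
      have h1 := hz _ (right_ne_zero_of_mul hT)
      refine ⟨?_, ?_⟩
      · have := (hv (T.erase v) (Finset.notMem_erase v T)).1 h1.1
        rwa [Finset.insert_erase hvT] at this
      · rw [← h1.2, Finset.card_erase_add_one hvT]
    · simp [hvT] at hT
  · by_cases hvS : v ∈ S
    · set S' := S.erase v with hS'
      have hvS' : v ∉ S' := Finset.notMem_erase v S
      have hSS : S = insert v S' := (Finset.insert_erase hvS).symm
      have hc := hz0 S' ((hv S' hvS').2 (hSS ▸ hS))
      unfold bd at hc ⊢
      have hcomp : S'ᶜ = insert v Sᶜ := by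
        ext x
        by_cases hx : x = v <;> simp [hS', hx]
      rw [hcomp, Finset.sum_insert (by simp [hvS]), ← hSS] at hc
      have key : ∀ t ∈ Sᶜ, eps K r t S * (if v ∈ insert t S then
          eps K r v ((insert t S).erase v) * z ((insert t S).erase v) else 0) =
          - eps K r v S' * (eps K r t S' * z (insert t S')) := by
        intro t ht
        have htS : t ∉ S := by simpa using ht
        have htv : t ≠ v := fun h => htS (h ▸ hvS)
        have htS' : t ∉ S' := fun h => htS (Finset.mem_of_mem_erase h)
        rw [if_pos (Finset.mem_insert_of_mem hvS)]
        have he : (insert t S).erase v = insert t S' := by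
          rw [Finset.erase_insert_of_ne htv]
        rw [he]
        have := eps_swap (K := K) r hr t v S' htv htS' hvS'
        rw [← hSS] at this
        linear_combination z (insert t S') * this
      rw [Finset.sum_congr rfl key, ← Finset.mul_sum]
      have := eps_sq (K := K) r v S'
      linear_combination (-eps K r v S') * hc + z S * this
    · unfold bd
      rw [Finset.sum_eq_single v]
      · simp only [Finset.mem_insert_self, if_true]
        rw [Finset.erase_insert hvS, ← mul_assoc, eps_sq, one_mul]
      · intro t ht htv
        dsimp only
        rw [if_neg, mul_zero]
        simp [hvS, Ne.symm htv]
      · intro h; simp [hvS] at h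

lemma Ex.fibre (r : ι → ℕ) (hr : Function.Injective r) {P : Finset ι → Prop} (hP : Conv P)
    {α : Type*} [PartialOrder α] (ρ : Finset ι → α)
    (hρ : ∀ S T, S ⊆ T → P S → P T → ρ S ≤ ρ T) {n : ℕ}
    (h : ∀ a, Ex K r (fun F => P F ∧ ρ F = a) n) : Ex K r P n := by
  classical
  have main : ∀ (k : ℕ) (X : Finset α), X.card = k →
      (∀ S T, S ⊆ T → P S → P T → ρ T ∈ X → ρ S ∈ X) →
      Ex K r (fun F => P F ∧ ρ F ∈ X) n := by
    intro k
    induction k with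
    | zero =>
      intro X hX _
      apply Ex.empty
      intro T hT
      rw [Finset.card_eq_zero.1 hX] at hT
      simp at hT
    | succ k ih =>
      intro X hX hd
      have hne : X.Nonempty := Finset.card_pos.1 (by omega)
      obtain ⟨a, ha⟩ := X.exists_maximal hne
      have h1 := ih (X.erase a) (by rw [Finset.card_erase_of_mem ha.1]; omega) (by
        intro S T hST hS hT hm
        have hm' := Finset.mem_erase.1 hm
        refine Finset.mem_erase.2 ⟨fun he => ?_, hd S T hST hS hT hm'.2⟩
        have hle := hρ S T hST hS hT
        rw [he] at hle
        exact hm'.1 (le_antisymm (ha.2 hm'.2 hle) hle))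
      refine Ex.mid r hr ⟨?_, ?_, ?_, ?_, ?_⟩ h1 (h a)
      · rintro A B C hAB hBC hA hC
        have hB := hP A B C hAB hBC hA.1 hC.1
        exact ⟨hB, hd B C hBC hB hC.1 hC.2⟩
      · rintro T ⟨h2, h3⟩
        exact ⟨h2, Finset.mem_of_mem_erase h3⟩
      · rintro T ⟨h2, h3⟩
        exact ⟨h2, h3 ▸ ha.1⟩
      · rintro T ⟨h2, h3⟩
        by_cases he : ρ T = a
        · exact Or.inr ⟨h2, he⟩
        · exact Or.inl ⟨h2, Finset.mem_erase.2 ⟨he, h3⟩⟩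
      · rintro S T hST ⟨h2, h3⟩ ⟨h4, h5⟩
        have hm' := Finset.mem_erase.1 h3
        have hle := hρ S T hST h4 h2
        rw [h5] at hle
        exact hm'.1 (le_antisymm (ha.2 hm'.2 hle) hle)
  refine (main _ (Finset.univ.image ρ) rfl ?_).congr ?_
  · intro S T _ _ _ _
    exact Finset.mem_image_of_mem _ (Finset.mem_univ _)
  · intro T
    exact ⟨fun h => h.1, fun h => ⟨h, Finset.mem_image_of_mem _ (Finset.mem_univ _)⟩⟩

lemma Ex.shift1 (r : ι → ℕ) (hr : Function.Injective r) {P : Finset ι → Prop} (u : ι)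
    (hu : ∀ F, P F → u ∉ F) {n : ℕ} (h : Ex K r P n) :
    Ex K r (fun F => u ∈ F ∧ P (F.erase u)) (n + 1) := by
  have key : ∀ (z : Finset ι → K) (F : Finset ι), u ∉ F →
      bd r (fun T => if u ∈ T then 0 else eps K r u T * z (insert u T)) F
        = - eps K r u F * bd r z (insert u F) := by
    intro z F huF
    unfold bd
    have hcomp : Fᶜ = insert u (insert u F)ᶜ := by
      ext x; simp; by_cases hx : x = u <;> simp [hx, huF]
    rw [hcomp, Finset.sum_insert (by simp)]
    dsimp only
    rw [if_pos (Finset.mem_insert_self _ _), mul_zero,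
      zero_add, Finset.mul_sum]
    refine Finset.sum_congr rfl fun t ht => ?_
    simp only [Finset.mem_compl, Finset.mem_insert, not_or] at ht
    rw [if_neg (by simp [huF, Ne.symm ht.1]), Finset.insert_comm u t F]
    have := eps_swap' (K := K) r hr t u F ht.1 ht.2 huF
    linear_combination z (insert t (insert u F)) * this
  intro z hz hz0
  obtain ⟨w, hw, hw2⟩ := h (fun T => if u ∈ T then 0 else eps K r u T * z (insert u T))
    (fun T hT => by
      by_cases huT : u ∈ T
      · simp [huT] at hT
      · simp only [huT, if_false] at hT
        obtain ⟨⟨h1, h2⟩, h3⟩ := hz _ (right_ne_zero_of_mul hT)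
        rw [Finset.erase_insert huT] at h2
        rw [Finset.card_insert_of_notMem huT] at h3
        exact ⟨h2, by omega⟩)
    (fun S hS => by
      rw [key z S (hu S hS), hz0 _ ⟨Finset.mem_insert_self _ _, by
        rwa [Finset.erase_insert (hu S hS)]⟩, mul_zero])
  refine ⟨fun T => if u ∈ T then - (eps K r u (T.erase u) * w (T.erase u)) else 0,
    fun T hT => ?_, fun S hS => ?_⟩
  · by_cases huT : u ∈ T
    · simp only [huT, if_true, neg_ne_zero] at hT
      obtain ⟨h1, h2⟩ := hw _ (right_ne_zero_of_mul hT)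
      refine ⟨⟨huT, h1⟩, ?_⟩
      rw [← h2, Finset.card_erase_add_one huT]
    · simp [huT] at hT
  · obtain ⟨huS, hPS⟩ := hS
    set F := S.erase u with hF
    have huF : u ∉ F := Finset.notMem_erase _ _
    have hSF : insert u F = S := Finset.insert_erase huS
    have hk := key (fun T => if u ∈ T then - (eps K r u (T.erase u) * w (T.erase u)) else 0) F huF
    have h2 := hw2 F hPS
    rw [if_neg huF, hSF] at h2
    rw [hSF] at hk
    have h3 : bd r (fun T => if u ∈ T then 0 else eps K r u T *
        (if u ∈ insert u T then
          - (eps K r u ((insert u T).erase u) * w ((insert u T).erase u)) else 0)) F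
        = bd r (fun T => 0 - w T) F := by
      apply bd_congr
      intro t ht
      by_cases hut : u ∈ insert t F
      · rw [if_pos hut]
        have : w (insert t F) = 0 := by
          by_contra hne
          exact hu _ (hw _ hne).1 hut
        rw [this, sub_zero]
      · rw [if_neg hut, if_pos (Finset.mem_insert_self _ _), Finset.erase_insert hut]
        have := eps_sq (K := K) r u (insert t F)
        linear_combination (- w (insert t F)) * this
    rw [h3, bd_sub, bd_zero r (fun _ => (0:K)) F (fun _ _ => rfl), h2] at hk
    have := eps_sq (K := K) r u F
    linear_combination (eps K r u F) * hk + (z S - bd r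
      (fun T => if u ∈ T then - (eps K r u (T.erase u) * w (T.erase u)) else 0) S) * this

lemma Ex.shift (r : ι → ℕ) (hr : Function.Injective r) {P : Finset ι → Prop} (U : Finset ι)
    (hU : ∀ F, P F → Disjoint U F) {n : ℕ} (h : Ex K r P n) :
    Ex K r (fun F => U ⊆ F ∧ P (F \ U)) (n + U.card) := by
  induction U using Finset.induction_on with
  | empty => exact h.congr (by simp)
  | insert u U hu ih =>
    have h1 := ih (fun F hF => (Finset.disjoint_insert_left.1 (hU F hF)).2)
    have h2 := Ex.shift1 r hr u (P := fun F => U ⊆ F ∧ P (F \ U)) (by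
      intro F hF huF
      exact (Finset.disjoint_insert_left.1 (hU _ hF.2)).1 (by simp [huF, hu])) h1
    rw [Finset.card_insert_of_notMem hu, ← add_assoc]
    refine h2.congr fun T => ?_
    have e : T.erase u \ U = T \ insert u U := by
      ext x; simp; tauto
    rw [e, Finset.insert_subset_iff]
    constructor
    · rintro ⟨a, b, c⟩
      exact ⟨⟨a, b.trans (Finset.erase_subset _ _)⟩, c⟩
    · rintro ⟨⟨a, b⟩, c⟩
      exact ⟨a, fun x hx => Finset.mem_erase.2 ⟨fun h => hu (h ▸ hx), b hx⟩, c⟩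

end Generic

section Embed
variable {ι κ K : Type*} [Fintype ι] [DecidableEq ι] [Fintype κ] [DecidableEq κ] [Field K]

lemma eps_map (r : ι → ℕ) (r' : κ → ℕ) (f : ι ↪ κ)
    (hf : ∀ a b, r' (f a) < r' (f b) ↔ r a < r b) (t : ι) (T : Finset ι) :
    eps K r' (f t) (T.map f) = eps K r t T := by
  unfold eps
  rw [Finset.filter_map, Finset.card_map]
  congr 2
  ext x; simp [hf]

lemma bd_map (r : ι → ℕ) (r' : κ → ℕ) (f : ι ↪ κ)
    (hf : ∀ a b, r' (f a) < r' (f b) ↔ r a < r b) (z : Finset κ → K)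
    (hz : ∀ S, z S ≠ 0 → ∃ T : Finset ι, T.map f = S) (T : Finset ι) :
    bd r' z (T.map f) = bd r (fun T => z (T.map f)) T := by
  unfold bd
  symm
  have : ∑ t ∈ Tᶜ, eps K r t T * z ((insert t T).map f) =
      ∑ s ∈ Tᶜ.map f, eps K r' s (T.map f) * z (insert s (T.map f)) := by
    rw [Finset.sum_map]
    refine Finset.sum_congr rfl fun t _ => ?_
    rw [eps_map r r' f hf, Finset.map_insert]
  rw [this]
  apply Finset.sum_subset
  · intro s hs
    simp only [Finset.mem_map, Finset.mem_compl] at hs ⊢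
    obtain ⟨a, ha, rfl⟩ := hs
    rintro ⟨b, hb, hb2⟩
    exact ha (f.injective hb2 ▸ hb)
  · intro s hs hs2
    by_contra h
    obtain ⟨T', hT'⟩ := hz _ (right_ne_zero_of_mul h)
    have : s ∈ T'.map f := hT' ▸ Finset.mem_insert_self _ _
    obtain ⟨a, ha, rfl⟩ := Finset.mem_map.1 this
    apply hs2
    simp only [Finset.mem_map, Finset.mem_compl] at hs ⊢
    exact ⟨a, fun h => hs ⟨a, h, rfl⟩, rfl⟩

lemma Ex.map_iff (r : ι → ℕ) (r' : κ → ℕ) (f : ι ↪ κ)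
    (hf : ∀ a b, r' (f a) < r' (f b) ↔ r a < r b) (P : Finset ι → Prop) (n : ℕ) :
    Ex K r' (fun S => ∃ T, T.map f = S ∧ P T) n ↔ Ex K r P n := by
  have hinj : Function.Injective (fun T : Finset ι => T.map f) := Finset.map_injective f
  have ext_supp : ∀ (w : Finset ι → K) (S : Finset κ),
      Function.extend (fun T : Finset ι => T.map f) w 0 S ≠ 0 →
      ∃ T : Finset ι, T.map f = S ∧ w T ≠ 0 := by
    intro w S hS
    by_cases h : ∃ T : Finset ι, T.map f = S
    · obtain ⟨T, rfl⟩ := h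
      rw [hinj.extend_apply] at hS
      exact ⟨T, rfl, hS⟩
    · rw [Function.extend_apply' _ _ _ h] at hS
      exact absurd rfl hS
  have ext_bd : ∀ (w : Finset ι → K) (T : Finset ι),
      bd r' (Function.extend (fun T : Finset ι => T.map f) w 0) (T.map f) = bd r w T := by
    intro w T
    rw [bd_map r r' f hf _ (fun S hS => (ext_supp w S hS).imp fun _ h => h.1)]
    congr 1
    funext T
    exact hinj.extend_apply _ _ _
  constructor
  · intro h z hz hz0
    obtain ⟨w, hw, hw2⟩ := h (Function.extend (fun T : Finset ι => T.map f) z 0)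
      (fun S hS => by
        obtain ⟨T, rfl, hT⟩ := ext_supp z S hS
        exact ⟨⟨T, rfl, (hz T hT).1⟩, by rw [Finset.card_map]; exact (hz T hT).2⟩)
      (by
        rintro S ⟨T, rfl, hT⟩
        rw [ext_bd]; exact hz0 T hT)
    refine ⟨fun T => w (T.map f), fun T hT => ?_, fun T hT => ?_⟩
    · obtain ⟨⟨T', h1, h2⟩, h3⟩ := hw _ hT
      rw [Finset.card_map] at h3
      exact ⟨hinj h1 ▸ h2, h3⟩
    · rw [← bd_map r r' f hf w (fun S hS => (hw S hS).1.imp fun _ h => h.1),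
        hw2 _ ⟨T, rfl, hT⟩]
      exact hinj.extend_apply _ _ _
  · intro h z hz hz0
    have hzs : ∀ S, z S ≠ 0 → ∃ T : Finset ι, T.map f = S :=
      fun S hS => (hz S hS).1.imp fun _ h => h.1
    obtain ⟨w, hw, hw2⟩ := h (fun T => z (T.map f))
      (fun T hT => by
        obtain ⟨⟨T', h1, h2⟩, h3⟩ := hz _ hT
        rw [Finset.card_map] at h3
        exact ⟨hinj h1 ▸ h2, h3⟩)
      (fun T hT => by
        rw [← bd_map r r' f hf z hzs]
        exact hz0 _ ⟨T, rfl, hT⟩)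
    refine ⟨Function.extend (fun T : Finset ι => T.map f) w 0, fun S hS => ?_, ?_⟩
    · obtain ⟨T, rfl, hT⟩ := ext_supp w S hS
      exact ⟨⟨T, rfl, (hw T hT).1⟩, by rw [Finset.card_map]; exact (hw T hT).2⟩
    · rintro S ⟨T, rfl, hT⟩
      rw [ext_bd]; exact hw2 T hT

end Embed

section Double
variable {V K : Type*} [Fintype V] [DecidableEq V] [Field K]

noncomputable def ind (F : Finset V) : V →₀ ℕ :=
  Finsupp.equivFunOnFinite.symm (fun v => if v ∈ F then 1 else 0)

lemma ind_apply (F : Finset V) (v : V) : ind F v = if v ∈ F then 1 else 0 := by simp [ind]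

noncomputable def rV (v : V) : ℕ := (Fintype.equivFin V v : ℕ)

lemma rV_inj : Function.Injective (rV : V → ℕ) := fun a b h => by
  unfold rV at h
  exact (Fintype.equivFin V).injective (Fin.ext h)

def Kos (J : (V →₀ ℕ) → Prop) (m : V →₀ ℕ) (F : Finset V) : Prop :=
  ind F ≤ m ∧ ¬ J (m - ind F)

variable {k : ℕ}

noncomputable def rs (x : V ⊕ Fin k) : ℕ :=
  Sum.elim (fun v : V => rV v) (fun i : Fin k => Fintype.card V + (i : ℕ)) x

lemma rs_inj : Function.Injective (rs : V ⊕ Fin k → ℕ) := by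
  have hlt : ∀ v : V, rV v < Fintype.card V := fun v => (Fintype.equivFin V v).2
  rintro (a | a) (b | b) h
  · simp only [rs, Sum.elim_inl] at h; rw [rV_inj h]
  · simp only [rs, Sum.elim_inl, Sum.elim_inr] at h; have := hlt a; omega
  · simp only [rs, Sum.elim_inl, Sum.elim_inr] at h; have := hlt b; omega
  · simp only [rs, Sum.elim_inr] at h
    congr 1
    exact Fin.ext (by omega)

def Dbl (gens : Fin k → (V →₀ ℕ)) (m : V →₀ ℕ) (S : Finset (V ⊕ Fin k)) : Prop :=
  ind S.toLeft + S.toRight.sup gens ≤ m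

lemma ind_mono {F F' : Finset V} (h : F ⊆ F') : ind F ≤ ind F' := by
  intro v
  rw [ind_apply, ind_apply]
  split_ifs with h1 h2
  · exact le_rfl
  · exact absurd (h h1) h2
  · exact Nat.zero_le _
  · exact le_rfl

lemma ind_zero {F : Finset V} (h : ind F = 0) : F = ∅ := by
  ext v
  have := DFunLike.congr_fun h v
  rw [ind_apply] at this
  simpa using this

lemma ind_empty : ind (∅ : Finset V) = 0 := by
  ext v; simp [ind_apply]

lemma toLeft_mono {S T : Finset (V ⊕ Fin k)} (h : S ⊆ T) : S.toLeft ⊆ T.toLeft := by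
  intro x hx
  rw [Finset.mem_toLeft] at hx ⊢
  exact h hx

lemma toRight_mono {S T : Finset (V ⊕ Fin k)} (h : S ⊆ T) : S.toRight ⊆ T.toRight := by
  intro x hx
  rw [Finset.mem_toRight] at hx ⊢
  exact h hx

lemma Dbl_anti {gens : Fin k → (V →₀ ℕ)} {m : V →₀ ℕ} {S T : Finset (V ⊕ Fin k)}
    (h : S ⊆ T) (hT : Dbl gens m T) : Dbl gens m S :=
  le_trans (add_le_add (ind_mono (toLeft_mono h)) (Finset.sup_mono (toRight_mono h))) hT

lemma Dbl_conv (gens : Fin k → (V →₀ ℕ)) (m : V →₀ ℕ) : Conv (Dbl gens m) :=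
  fun _ _ _ _ h _ hC => Dbl_anti h hC

lemma splitT (gens : Fin k → (V →₀ ℕ)) (m : V →₀ ℕ) :
    Split (Dbl gens m) (fun S => Dbl gens m S ∧ S.toRight.sup gens ≠ m)
      (fun S => Dbl gens m S ∧ S.toRight.sup gens = m) where
  conv := Dbl_conv gens m
  a := fun _ h => h.1
  b := fun _ h => h.1
  or := fun T h => by
    by_cases h' : T.toRight.sup gens = m
    · exact Or.inr ⟨h, h'⟩
    · exact Or.inl ⟨h, h'⟩
  down := by
    rintro S T hST ⟨h1, h2⟩ ⟨h3, h4⟩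
    apply h2
    apply le_antisymm
    · exact le_trans (le_add_of_nonneg_left zero_le) h1
    · rw [← h4]; exact Finset.sup_mono (toRight_mono hST)

lemma splitK (gens : Fin k → (V →₀ ℕ)) (m : V →₀ ℕ) :
    Split (Dbl gens m) (fun S => Dbl gens m S ∧ ∃ i, gens i ≤ m - ind S.toLeft)
      (fun S => Dbl gens m S ∧ ¬ ∃ i, gens i ≤ m - ind S.toLeft) where
  conv := Dbl_conv gens m
  a := fun _ h => h.1
  b := fun _ h => h.1
  or := fun T h => by
    by_cases h' : ∃ i, gens i ≤ m - ind T.toLeft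
    · exact Or.inl ⟨h, h'⟩
    · exact Or.inr ⟨h, h'⟩
  down := by
    rintro S T hST ⟨h1, i, h2⟩ ⟨h3, h4⟩
    exact h4 ⟨i, h2.trans (tsub_le_tsub_left (ind_mono (toLeft_mono hST)) m)⟩

lemma toLeft_insert_inl (v : V) (S : Finset (V ⊕ Fin k)) :
    (insert (Sum.inl v) S).toLeft = insert v S.toLeft := by ext; simp
lemma toRight_insert_inl (v : V) (S : Finset (V ⊕ Fin k)) :
    (insert (Sum.inl v) S).toRight = S.toRight := by ext; simp
lemma toLeft_insert_inr (v : Fin k) (S : Finset (V ⊕ Fin k)) :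
    (insert (Sum.inr v) S).toLeft = S.toLeft := by ext; simp
lemma toRight_insert_inr (v : Fin k) (S : Finset (V ⊕ Fin k)) :
    (insert (Sum.inr v) S).toRight = insert v S.toRight := by ext; simp

lemma exT (gens : Fin k → (V →₀ ℕ)) (m : V →₀ ℕ) (n : ℕ) :
    Ex K rs (fun S => Dbl gens m S ∧ S.toRight.sup gens ≠ m) n := by
  refine Ex.fibre rs rs_inj ?_ (fun S => S.toRight) (fun S T h _ _ => toRight_mono h) ?_
  · rintro A B C hAB hBC ⟨hA, hA2⟩ ⟨hC, hC2⟩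
    have hB := Dbl_anti hBC hC
    refine ⟨hB, fun h => hC2 (le_antisymm ?_ ?_)⟩
    · exact le_trans (le_add_of_nonneg_left zero_le) hC
    · rw [← h]; exact Finset.sup_mono (toRight_mono hBC)
  · intro T
    by_cases hT : ∃ v, (T.sup gens) v < m v
    · obtain ⟨v, hv⟩ := hT
      apply Ex.toggle rs rs_inj (Sum.inl v)
      intro S hS
      rw [toRight_insert_inl]
      constructor
      · rintro ⟨⟨h1, h2⟩, h3⟩
        refine ⟨⟨?_, h2⟩, h3⟩
        intro x
        have hx := h1 x
        simp only [Finsupp.add_apply, toLeft_insert_inl, toRight_insert_inl, ind_apply] at hx ⊢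
        by_cases hxv : x = v
        · subst hxv
          rw [h3, if_pos (Finset.mem_insert_self _ _)]; omega
        · simpa [hxv] using hx
      · rintro ⟨⟨h1, h2⟩, h3⟩
        exact ⟨⟨Dbl_anti (Finset.subset_insert _ _) h1, h2⟩, h3⟩
    · apply Ex.empty
      rintro S ⟨⟨h1, h2⟩, h3⟩
      exfalso
      push Not at hT
      apply h2
      rw [h3]
      apply le_antisymm
      · rw [← h3]; exact le_trans (le_add_of_nonneg_left zero_le) h1
      · exact hT

lemma exK (gens : Fin k → (V →₀ ℕ)) (m : V →₀ ℕ) (n : ℕ) :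
    Ex K rs (fun S => Dbl gens m S ∧ ∃ i, gens i ≤ m - ind S.toLeft) n := by
  refine Ex.fibre rs rs_inj ?_ (fun S => S.toLeft) (fun S T h _ _ => toLeft_mono h) ?_
  · rintro A B C hAB hBC ⟨hA, hA2⟩ ⟨hC, i, hC2⟩
    have hB := Dbl_anti hBC hC
    exact ⟨hB, i, hC2.trans (tsub_le_tsub_left (ind_mono (toLeft_mono hBC)) m)⟩
  · intro F
    by_cases hF : ∃ i, gens i ≤ m - ind F
    · obtain ⟨i, hi⟩ := hF
      apply Ex.toggle rs rs_inj (Sum.inr i)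
      intro S hS
      rw [toLeft_insert_inr]
      constructor
      · rintro ⟨⟨h1, h2⟩, h3⟩
        refine ⟨⟨?_, h2⟩, h3⟩
        unfold Dbl at h1 ⊢
        rw [toLeft_insert_inr, toRight_insert_inr, Finset.sup_insert, h3]
        rw [h3] at h1
        intro x
        have hx := h1 x
        have hix := hi x
        simp only [Finsupp.add_apply, Finsupp.tsub_apply, Finsupp.sup_apply] at hx hix ⊢
        rcases le_total (gens i x) ((S.toRight.sup gens) x) with hh | hh
        · rw [sup_eq_right.2 hh]; exact hx
        · rw [sup_eq_left.2 hh]; omega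
      · rintro ⟨⟨h1, h2⟩, h3⟩
        exact ⟨⟨Dbl_anti (Finset.subset_insert _ _) h1, h2⟩, h3⟩
    · apply Ex.empty
      rintro S ⟨⟨h1, h2⟩, h3⟩
      exact absurd (h3 ▸ h2) hF

lemma tay_iff_kos (gens : Fin k → (V →₀ ℕ)) (m : V →₀ ℕ) (J : (V →₀ ℕ) → Prop)
    (hJ : ∀ c, J c ↔ ∃ i, gens i ≤ c) (n : ℕ) :
    Ex K (fun i : Fin k => (i : ℕ)) (fun T => T.sup gens = m) n ↔ Ex K rV (Kos J m) n := by
  have h1 : Ex K (rs (V := V)) (fun S => Dbl gens m S ∧ S.toRight.sup gens = m) n ↔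
      Ex K (fun i : Fin k => (i : ℕ)) (fun T => T.sup gens = m) n := by
    rw [← Ex.map_iff (fun i : Fin k => (i : ℕ)) (rs (V := V)) Function.Embedding.inr
      (by intro a b; simp [rs])]
    have : (fun S => Dbl gens m S ∧ S.toRight.sup gens = m) = (fun S : Finset (V ⊕ Fin k) =>
        ∃ T : Finset (Fin k), T.map Function.Embedding.inr = S ∧ T.sup gens = m) := by
      funext S
      apply propext
      constructor
      · rintro ⟨h1, h2⟩
        refine ⟨S.toRight, ?_, h2⟩
        have hL : S.toLeft = ∅ := by
          apply ind_zero
          unfold Dbl at h1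
          rw [h2] at h1
          ext v
          have := h1 v
          simp only [Finsupp.add_apply] at this
          simp only [Finsupp.coe_zero, Pi.zero_apply]
          omega
        ext x
        rcases x with x | x
        · have : x ∉ S.toLeft := by simp [hL]
          simpa using this
        · simp
      · rintro ⟨T, rfl, h⟩
        have e1 : (T.map (Function.Embedding.inr : Fin k ↪ V ⊕ Fin k)).toRight = T := by
          ext; simp
        have e2 : (T.map (Function.Embedding.inr : Fin k ↪ V ⊕ Fin k)).toLeft = ∅ := by
          ext; simp
        unfold Dbl
        rw [e1, e2, ind_empty, zero_add]
        exact ⟨h.le, h⟩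
    rw [this]
  have h2 : Ex K rs (fun S => Dbl gens m S ∧ ¬ ∃ i, gens i ≤ m - ind S.toLeft) n ↔
      Ex K rV (Kos J m) n := by
    rw [← Ex.map_iff (rV : V → ℕ) (rs (k := k)) Function.Embedding.inl
      (by intro a b; simp [rs])]
    have : (fun S => Dbl gens m S ∧ ¬ ∃ i, gens i ≤ m - ind S.toLeft) =
        (fun S : Finset (V ⊕ Fin k) =>
        ∃ T : Finset V, T.map Function.Embedding.inl = S ∧ Kos J m T) := by
      funext S
      apply propext
      constructor
      · rintro ⟨h1, h2⟩
        have hR : S.toRight = ∅ := by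
          by_contra hne
          obtain ⟨i, hi⟩ := Finset.nonempty_iff_ne_empty.2 hne
          apply h2
          refine ⟨i, fun x => ?_⟩
          have hx := h1 x
          have h3 : gens i ≤ S.toRight.sup gens := Finset.le_sup hi
          have h3x := h3 x
          simp only [Finsupp.add_apply, Finsupp.tsub_apply] at hx ⊢
          omega
        refine ⟨S.toLeft, ?_, ?_, ?_⟩
        · ext x
          rcases x with x | x
          · simp
          · have : x ∉ S.toRight := by simp [hR]
            simpa using this
        · exact le_trans (le_add_of_nonneg_right zero_le) h1
        · rw [hJ]; exact h2
      · rintro ⟨T, rfl, h1, h2⟩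
        have e1 : (T.map (Function.Embedding.inl : V ↪ V ⊕ Fin k)).toLeft = T := by
          ext; simp
        have e2 : (T.map (Function.Embedding.inl : V ↪ V ⊕ Fin k)).toRight = ∅ := by
          ext; simp
        unfold Dbl
        rw [e1, e2, Finset.sup_empty, ← hJ]
        exact ⟨by simpa [bot_eq_zero] using h1, h2⟩
    rw [this]
  rw [← h1, ← h2]
  constructor
  · intro h
    exact Ex.quot rs rs_inj (splitK gens m)
      (Ex.mid rs rs_inj (splitT gens m) (exT gens m n) h) (exK gens m)
  · intro h
    exact Ex.quot rs rs_inj (splitT gens m)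
      (Ex.mid rs rs_inj (splitK gens m) (exK gens m n) h) (exT gens m)

end Double

section Graph
variable {V K : Type*} [Fintype V] [DecidableEq V] [Field K]

def XX (K : Type*) [Field K] (D : Finset V → Prop) (W : Finset V) (n : ℕ) : Prop :=
  Ex K (rV : V → ℕ) (fun F => F ⊆ W ∧ D (W \ F)) n

lemma XX.congr {D D' : Finset V → Prop} {W : Finset V} {n : ℕ}
    (h : ∀ σ, σ ⊆ W → (D σ ↔ D' σ)) (hD : XX K D W n) : XX K D' W n := by
  refine Ex.congr (fun T => ?_) hD
  rw [h _ Finset.sdiff_subset]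

lemma XX.empty {D : Finset V → Prop} {W : Finset V} {n : ℕ}
    (h : ∀ σ, σ ⊆ W → D σ → σ.card + n ≠ W.card) : XX K D W n := by
  refine Ex.empty ?_
  rintro T ⟨h1, h2⟩ h3
  apply h _ Finset.sdiff_subset h2
  rw [← h3, Finset.card_sdiff_add_card_eq_card h1]

lemma XX.toggle {D : Finset V → Prop} {W : Finset V} (y : V) (hy : y ∈ W)
    (h : ∀ σ, σ ⊆ W → y ∉ σ → (D σ ↔ D (insert y σ))) (n : ℕ) : XX K D W n := by
  refine Ex.toggle rV rV_inj y (fun F hF => ?_) n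
  have e : W \ F = insert y (W \ insert y F) := by
    ext x; by_cases hx : x = y
    · subst hx; simp [hy, hF]
    · simp [hx]
  rw [e, ← h _ Finset.sdiff_subset (by simp), Finset.insert_subset_iff]
  simp [hy]

lemma conv_XX {D : Finset V → Prop} (hD : Conv D) (W : Finset V) :
    Conv (fun F => F ⊆ W ∧ D (W \ F)) := by
  rintro A B C hAB hBC ⟨hA, hA2⟩ ⟨hC, hC2⟩
  exact ⟨hBC.trans hC, hD _ _ _ (Finset.sdiff_subset_sdiff le_rfl hBC)
    (Finset.sdiff_subset_sdiff le_rfl hAB) hC2 hA2⟩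

lemma XX.fibre {D : Finset V → Prop} (hD : Conv D) {W : Finset V} {n : ℕ}
    {α : Type*} [PartialOrder α] (ρ : Finset V → α) (hρ : Monotone ρ)
    (h : ∀ a, XX K (fun σ => D σ ∧ ρ σ = a) W n) : XX K D W n := by
  refine Ex.fibre rV rV_inj (conv_XX hD W) (fun F => OrderDual.toDual (ρ (W \ F))) ?_ ?_
  · intro S T hST _ _
    exact OrderDual.toDual_le_toDual.2 (hρ (Finset.sdiff_subset_sdiff le_rfl hST))
  · intro a
    refine Ex.congr (fun T => ?_) (h (OrderDual.ofDual a))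
    rw [and_assoc]
    rfl

lemma split_XX {D Q : Finset V → Prop} (hD : Conv D) (hQ : ∀ σ τ, σ ⊆ τ → Q σ → Q τ)
    (W : Finset V) : Split (fun F => F ⊆ W ∧ D (W \ F))
      (fun F => F ⊆ W ∧ (D (W \ F) ∧ Q (W \ F))) (fun F => F ⊆ W ∧ (D (W \ F) ∧ ¬ Q (W \ F))) where
  conv := conv_XX hD W
  a := fun _ h => ⟨h.1, h.2.1⟩
  b := fun _ h => ⟨h.1, h.2.1⟩
  or := fun T h => by
    by_cases h' : Q (W \ T)
    · exact Or.inl ⟨h.1, h.2, h'⟩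
    · exact Or.inr ⟨h.1, h.2, h'⟩
  down := by
    rintro S T hST ⟨_, _, h1⟩ ⟨_, _, h2⟩
    exact h2 (hQ _ _ (Finset.sdiff_subset_sdiff le_rfl hST) h1)

lemma XX.mid {D Q : Finset V → Prop} (hD : Conv D) (hQ : ∀ σ τ, σ ⊆ τ → Q σ → Q τ)
    {W : Finset V} {n : ℕ} (h1 : XX K (fun σ => D σ ∧ Q σ) W n)
    (h2 : XX K (fun σ => D σ ∧ ¬ Q σ) W n) : XX K D W n :=
  Ex.mid rV rV_inj (split_XX hD hQ W) h1 h2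

lemma XX.sub {D Q : Finset V → Prop} (hD : Conv D) (hQ : ∀ σ τ, σ ⊆ τ → Q σ → Q τ)
    {W : Finset V} {n : ℕ} (h1 : XX K D W n)
    (h2 : XX K (fun σ => D σ ∧ ¬ Q σ) W (n + 1)) : XX K (fun σ => D σ ∧ Q σ) W n :=
  Ex.sub rV rV_inj (split_XX hD hQ W) h1 h2

lemma XX.shift {D : Finset V → Prop} {W S Y : Finset V} (hS : S ⊆ W) (hY : Y ⊆ W)
    (hSY : Disjoint S Y) {n n' : ℕ} (hn : n' + W.card = n + S.card + Y.card)
    (h : XX K D Y n') : XX K (fun σ => S ⊆ σ ∧ σ ⊆ S ∪ Y ∧ D (σ \ S)) W n := by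
  have h1 := Ex.shift (K := K) rV rV_inj (P := fun F => F ⊆ Y ∧ D (Y \ F)) (W \ (S ∪ Y)) (by
    rintro F ⟨hF, _⟩
    rw [Finset.disjoint_left]
    intro x hx hxF
    simp only [Finset.mem_sdiff, Finset.mem_union, not_or] at hx
    exact hx.2.2 (hF hxF)) h
  have hc : (W \ (S ∪ Y)).card + (S.card + Y.card) = W.card := by
    rw [← Finset.card_union_of_disjoint hSY]
    exact Finset.card_sdiff_add_card_eq_card (Finset.union_subset hS hY)
  have hnn : n' + (W \ (S ∪ Y)).card = n := by omega
  rw [hnn] at h1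
  refine h1.congr (fun F => ?_)
  rw [Finset.disjoint_left] at hSY
  constructor
  · rintro ⟨a, b, c⟩
    have hFW : F ⊆ W := by
      intro x hx
      by_cases hxu : x ∈ W \ (S ∪ Y)
      · exact (Finset.mem_sdiff.1 hxu).1
      · exact hY (b (Finset.mem_sdiff.2 ⟨hx, hxu⟩))
    have e : Y \ (F \ (W \ (S ∪ Y))) = (W \ F) \ S := by
      ext x
      have ax := @a x
      have bx := @b x
      have s1 := @hSY x
      have s2 := @hY x
      simp only [Finset.mem_sdiff, Finset.mem_union] at *
      tauto
    rw [e] at c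
    refine ⟨hFW, ?_, ?_, c⟩
    · intro x hx
      refine Finset.mem_sdiff.2 ⟨hS hx, fun hF => hSY hx (b (Finset.mem_sdiff.2 ⟨hF, ?_⟩))⟩
      simp [hx]
    · intro x hx
      have ax := @a x
      simp only [Finset.mem_sdiff, Finset.mem_union] at *
      tauto
  · rintro ⟨a, b, c, d⟩
    have e : Y \ (F \ (W \ (S ∪ Y))) = (W \ F) \ S := by
      ext x
      have ax := @a x
      have bx := @b x
      have cx := @c x
      have s1 := @hSY x
      have s2 := @hY x
      simp only [Finset.mem_sdiff, Finset.mem_union] at *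
      tauto
    refine ⟨?_, ?_, e ▸ d⟩
    · intro x hx
      have cx := @c x
      simp only [Finset.mem_sdiff, Finset.mem_union] at *
      tauto
    · intro x hx
      have ax := @a x
      have bx := @b x
      simp only [Finset.mem_sdiff, Finset.mem_union] at *
      tauto

variable (G : SimpleGraph V)

def Indep (σ : Finset V) : Prop := ∀ a ∈ σ, ∀ b ∈ σ, ¬ G.Adj a b

def D2 (σ : Finset V) : Prop := ∀ a ∈ σ, ∀ b ∈ σ, ∀ c ∈ σ, ∀ d ∈ σ,
  G.Adj a b → G.Adj c d → a ≠ c → a ≠ d → b ≠ c → b ≠ d → False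

def ZZ (u v x : V) : Prop := ¬ G.Adj u x ∧ ¬ G.Adj v x

variable {G}

lemma ZZ_ne {u v x : V} (huv : G.Adj u v) (h : ZZ G u v x) : x ≠ u ∧ x ≠ v :=
  ⟨fun e => h.2 (e ▸ huv.symm), fun e => h.1 (e ▸ huv)⟩

lemma ZZ_indep (hgap : G.GapFree) {u v x y : V} (huv : G.Adj u v) (hx : ZZ G u v x)
    (hy : ZZ G u v y) : ¬ G.Adj x y := by
  intro h
  have h1 := ZZ_ne huv hx
  have h2 := ZZ_ne huv hy
  rcases hgap u v x y huv h h1.1.symm h2.1.symm h1.2.symm h2.2.symm with h | h | h | h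
  · exact hx.1 h
  · exact hy.1 h
  · exact hx.2 h
  · exact hy.2 h

lemma zpart {u v : V} (huv : G.Adj u v) (U b W : Finset V) (n : ℕ) (hn : n + 3 ≤ W.card) :
    XX K (fun σ => u ∈ σ ∧ v ∈ σ ∧ Disjoint σ U ∧
      ∀ x ∈ σ, x = u ∨ x = v ∨ (ZZ G u v x ∧ x ∉ b)) W n := by
  by_cases hy : ∃ y ∈ W, ZZ G u v y ∧ y ∉ U ∧ y ∉ b
  · obtain ⟨y, hyW, hyZ, hyU, hyb⟩ := hy
    have hne := ZZ_ne huv hyZ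
    apply XX.toggle y hyW
    intro σ _ hyσ
    simp only [Finset.mem_insert, Finset.disjoint_insert_left, forall_eq_or_imp]
    constructor
    · rintro ⟨h1, h2, h3, h4⟩
      exact ⟨Or.inr h1, Or.inr h2, ⟨hyU, h3⟩, Or.inr (Or.inr ⟨hyZ, hyb⟩), h4⟩
    · rintro ⟨h1, h2, h3, _, h4⟩
      exact ⟨h1.resolve_left hne.1.symm, h2.resolve_left hne.2.symm, h3.2, h4⟩
  · apply XX.empty
    rintro σ hσ ⟨h1, h2, h3, h4⟩
    have : σ ⊆ {u, v} := by
      intro x hx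
      rcases h4 x hx with h | h | h
      · simp [h]
      · simp [h]
      · exact absurd ⟨x, hσ hx, h.1, Finset.disjoint_left.1 h3 hx, h.2⟩ hy
    have := (Finset.card_le_card this).trans Finset.card_le_two
    omega

lemma blk (hgap : G.GapFree) {p : ℕ}
    (H : ∀ (Y : Finset V) (n : ℕ), n ≤ p + 1 → n + 2 ≤ Y.card → XX K (Indep G) Y n)
    {u v : V} (huv : G.Adj u v) (U b W : Finset V) (hub : u ∉ b) (hvb : v ∉ b)
    (n : ℕ) (hnp : n ≤ p + 1) (hn : n + 4 ≤ W.card) :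
    XX K (fun σ => (u ∈ σ ∧ v ∈ σ ∧ Disjoint σ U ∧
      (∀ x ∈ σ, x = u ∨ x = v ∨ x ∈ b ∨ ZZ G u v x) ∧ Indep G (σ \ {u, v})) ∧
      ∃ x ∈ σ, x ∈ b) W n := by
  by_cases hW : u ∈ W ∧ v ∈ W ∧ u ∉ U ∧ v ∉ U
  swap
  · apply XX.empty
    rintro σ hσ ⟨⟨h1, h2, h3, -⟩, -⟩
    exact absurd ⟨hσ h1, hσ h2, Finset.disjoint_left.1 h3 h1, Finset.disjoint_left.1 h3 h2⟩ hW
  obtain ⟨huW, hvW, huU, hvU⟩ := hW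
  apply XX.sub
  · rintro A B C hAB hBC ⟨h1, h2, h3, h4, h5⟩ ⟨k1, k2, k3, k4, k5⟩
    refine ⟨hAB h1, hAB h2, Finset.disjoint_of_subset_left hBC k3, fun x hx => k4 x (hBC hx), ?_⟩
    intro x hx y hy
    exact k5 x (Finset.sdiff_subset_sdiff hBC le_rfl hx) y (Finset.sdiff_subset_sdiff hBC le_rfl hy)
  · rintro σ τ h ⟨x, hx, hxb⟩
    exact ⟨x, h hx, hxb⟩
  · classical
    set Y := W.filter (fun x => x ≠ u ∧ x ≠ v ∧ x ∉ U ∧ (x ∈ b ∨ ZZ G u v x)) with hYdef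
    have hYW : Y ⊆ W := Finset.filter_subset _ _
    have hSW : ({u, v} : Finset V) ⊆ W := by
      intro x hx
      simp only [Finset.mem_insert, Finset.mem_singleton] at hx
      rcases hx with rfl | rfl <;> assumption
    have hdis : Disjoint ({u, v} : Finset V) Y := by
      rw [Finset.disjoint_left]
      intro x hx hxY
      simp only [Finset.mem_insert, Finset.mem_singleton] at hx
      have := (Finset.mem_filter.1 hxY).2
      tauto
    have hc2 : ({u, v} : Finset V).card = 2 := Finset.card_pair huv.ne
    have hle : 2 + Y.card ≤ W.card := by
      rw [← hc2, ← Finset.card_union_of_disjoint hdis]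
      exact Finset.card_le_card (Finset.union_subset hSW hYW)
    have heq : ∀ σ, σ ⊆ W → (({u, v} ⊆ σ ∧ σ ⊆ {u, v} ∪ Y ∧ Indep G (σ \ {u, v})) ↔
        (u ∈ σ ∧ v ∈ σ ∧ Disjoint σ U ∧
      (∀ x ∈ σ, x = u ∨ x = v ∨ x ∈ b ∨ ZZ G u v x) ∧ Indep G (σ \ {u, v}))) := by
      intro σ hσ
      constructor
      · rintro ⟨h1, h2, h3⟩
        have h2' : ∀ x ∈ σ, x = u ∨ x = v ∨ x ∈ Y := by
          intro x hx
          have := h2 hx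
          simp only [Finset.mem_union, Finset.mem_insert, Finset.mem_singleton] at this
          tauto
        refine ⟨h1 (by simp), h1 (by simp), ?_, ?_, h3⟩
        · rw [Finset.disjoint_left]
          intro x hx
          rcases h2' x hx with rfl | rfl | h
          · exact huU
          · exact hvU
          · exact (Finset.mem_filter.1 h).2.2.2.1
        · intro x hx
          rcases h2' x hx with h | h | h
          · exact Or.inl h
          · exact Or.inr (Or.inl h)
          · exact Or.inr (Or.inr (Finset.mem_filter.1 h).2.2.2.2)
      · rintro ⟨h1, h2, h3, h4, h5⟩
        refine ⟨?_, ?_, h5⟩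
        · intro x hx
          simp only [Finset.mem_insert, Finset.mem_singleton] at hx
          rcases hx with rfl | rfl <;> assumption
        · intro x hx
          simp only [Finset.mem_union, Finset.mem_insert, Finset.mem_singleton]
          by_cases hxu : x = u
          · exact Or.inl (Or.inl hxu)
          by_cases hxv : x = v
          · exact Or.inl (Or.inr hxv)
          right
          refine Finset.mem_filter.2 ⟨hσ hx, hxu, hxv, Finset.disjoint_left.1 h3 hx, ?_⟩
          have := h4 x hx
          tauto
    refine XX.congr heq ?_
    by_cases hlt : W.card ≤ n + 2 + Y.card
    · refine XX.shift hSW hYW hdis (n' := n + 2 + Y.card - W.card) (by omega) ?_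
      exact H Y _ (by omega) (by omega)
    · apply XX.empty
      rintro σ hσ ⟨h1, h2, h3⟩
      have := Finset.card_le_card h2
      rw [Finset.card_union_of_disjoint hdis] at this
      omega
  · refine XX.congr ?_ (zpart (K := K) huv U b W (n + 1) (by omega))
    intro σ hσ
    constructor
    · rintro ⟨h1, h2, h3, h4⟩
      refine ⟨⟨h1, h2, h3, fun x hx => ?_, ?_⟩, ?_⟩
      · have := h4 x hx
        tauto
      · intro x hx y hy
        simp only [Finset.mem_sdiff, Finset.mem_insert, Finset.mem_singleton, not_or] at hx hy
        have h5 := h4 x hx.1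
        have h6 := h4 y hy.1
        exact ZZ_indep hgap huv (by tauto) (by tauto)
      · rintro ⟨x, hx, hxb⟩
        rcases h4 x hx with rfl | rfl | h
        · exact hub hxb
        · exact hvb hxb
        · exact h.2 hxb
    · rintro ⟨⟨h1, h2, h3, h4, h5⟩, h6⟩
      refine ⟨h1, h2, h3, fun x hx => ?_⟩
      have h7 : x ∉ b := fun h => h6 ⟨x, hx, h⟩
      have := h4 x hx
      tauto

open Classical in
noncomputable def block (G : SimpleGraph V) (u v x : V) : Finset V :=
  if x = u ∨ x = v then ∅
  else Finset.univ.filter (fun y => y ≠ u ∧ y ≠ v ∧ ¬ ZZ G u v x ∧ ¬ ZZ G u v y ∧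
    (G.Adj u x ↔ G.Adj u y) ∧ (G.Adj v x ↔ G.Adj v y) ∧
    (G.Adj u x → G.Adj v x → x = y))

lemma mem_block {u v x y : V} : y ∈ block G u v x ↔ x ≠ u ∧ x ≠ v ∧
    y ≠ u ∧ y ≠ v ∧ ¬ ZZ G u v x ∧ ¬ ZZ G u v y ∧
    (G.Adj u x ↔ G.Adj u y) ∧ (G.Adj v x ↔ G.Adj v y) ∧
    (G.Adj u x → G.Adj v x → x = y) := by
  unfold block
  split_ifs with h
  · simp only [Finset.notMem_empty, false_iff]
    tauto
  · simp only [Finset.mem_filter, Finset.mem_univ, true_and]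
    tauto

lemma same_aux {u v y z : V} (a1 : ¬ (G.Adj u y ∧ G.Adj v z)) (a2 : ¬ (G.Adj u z ∧ G.Adj v y))
    (yZ : ¬ ZZ G u v y) (zZ : ¬ ZZ G u v z) :
    (G.Adj u y ↔ G.Adj u z) ∧ (G.Adj v y ↔ G.Adj v z) ∧ ¬ (G.Adj u z ∧ G.Adj v z) ∧ True := by
  unfold ZZ at yZ zZ
  by_cases p1 : G.Adj u y <;> by_cases p2 : G.Adj v y <;> by_cases p3 : G.Adj u z <;>
    by_cases p4 : G.Adj v z <;> simp_all

set_option maxHeartbeats 1000000 in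
lemma fib (hgap : G.GapFree) {p : ℕ}
    (H : ∀ (Y : Finset V) (n : ℕ), n ≤ p + 1 → n + 2 ≤ Y.card → XX K (Indep G) Y n)
    {u v : V} (huv : G.Adj u v) (U W : Finset V)
    (n : ℕ) (hnp : n ≤ p + 1) (hn : n + 4 ≤ W.card) :
    XX K (fun σ => u ∈ σ ∧ v ∈ σ ∧ Disjoint σ U ∧ D2 G σ) W n := by
  refine XX.fibre (ρ := fun σ => σ.biUnion (block G u v)) ?_ ?_ ?_
  · rintro A B C hAB hBC ⟨h1, h2, h3, h4⟩ ⟨k1, k2, k3, k4⟩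
    exact ⟨hAB h1, hAB h2, Finset.disjoint_of_subset_left hBC k3, fun a ha b hb c hc d hd =>
      k4 a (hBC ha) b (hBC hb) c (hBC hc) d (hBC hd)⟩
  · intro σ τ h
    exact Finset.biUnion_subset_biUnion_of_subset_left _ h
  intro B
  by_cases hB : ∃ σ0, (u ∈ σ0 ∧ v ∈ σ0 ∧ Disjoint σ0 U ∧ D2 G σ0) ∧
      σ0.biUnion (block G u v) = B
  swap
  · apply XX.empty
    intro σ _ h
    exact absurd ⟨σ, h⟩ hB
  obtain ⟨σ0, ⟨h1, h2, h3, h4⟩, rfl⟩ := hB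
  -- elements outside of u, v, Z lie in their own block
  have hself : ∀ x, x ≠ u → x ≠ v → ¬ ZZ G u v x → x ∈ block G u v x := by
    intro x a b c
    rw [mem_block]; tauto
  have hblocknil : ∀ x, x = u ∨ x = v ∨ ZZ G u v x → block G u v x = ∅ := by
    intro x hx
    ext y
    rw [mem_block]
    simp only [Finset.notMem_empty, iff_false]
    tauto
  by_cases hx : ∃ x ∈ σ0, x ≠ u ∧ x ≠ v ∧ ¬ ZZ G u v x
  · obtain ⟨x, hx0, hxu, hxv, hxZ⟩ := hx
    -- any two such elements in a D2 set have the same block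
    have hsame : ∀ σ, u ∈ σ → v ∈ σ → D2 G σ → ∀ y ∈ σ, ∀ z ∈ σ, y ≠ u → y ≠ v → ¬ ZZ G u v y →
        z ≠ u → z ≠ v → ¬ ZZ G u v z → block G u v y = block G u v z := by
      intro σ hu hv hD y hy z hz yu yv yZ zu zv zZ
      by_cases hyz : y = z
      · rw [hyz]
      have e1 := hD u hu y hy v hv z hz
      have e2 := hD u hu z hz v hv y hy
      have a1 : ¬ (G.Adj u y ∧ G.Adj v z) := fun h =>
        e1 h.1 h.2 huv.ne (Ne.symm zu) yv hyz
      have a2 : ¬ (G.Adj u z ∧ G.Adj v y) := fun h =>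
        e2 h.1 h.2 huv.ne (Ne.symm yu) zv (Ne.symm hyz)
      obtain ⟨b1, b2, b3, b4⟩ := same_aux a1 a2 yZ zZ
      ext t
      rw [mem_block, mem_block, b1, b2]
      have c1 : (G.Adj u z → G.Adj v z → y = t) ↔ True := iff_true_intro (fun h h' => absurd ⟨h, h'⟩ b3)
      have c2 : (G.Adj u z → G.Adj v z → z = t) ↔ True := iff_true_intro (fun h h' => absurd ⟨h, h'⟩ b3)
      rw [c1, c2]
      simp only [yu, yv, yZ, zu, zv, zZ, ne_eq, not_false_iff, true_and]
    have hBeq : ∀ σ, u ∈ σ → v ∈ σ → D2 G σ → ∀ y ∈ σ, y ≠ u → y ≠ v → ¬ ZZ G u v y →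
        σ.biUnion (block G u v) = block G u v y := by
      intro σ hu hv hD y hy yu yv yZ
      apply Finset.Subset.antisymm
      · intro t ht
        obtain ⟨z, hz, htz⟩ := Finset.mem_biUnion.1 ht
        have hz' := mem_block.1 htz
        rw [hsame σ hu hv hD y hy z hz yu yv yZ hz'.1 hz'.2.1 hz'.2.2.2.2.1]
        exact htz
      · exact Finset.subset_biUnion_of_mem (block G u v) hy
    rw [hBeq σ0 h1 h2 h4 x hx0 hxu hxv hxZ]
    refine XX.congr ?_ (blk (K := K) hgap H huv U (block G u v x) W
      (fun h => (mem_block.1 h).2.2.1 rfl) (fun h => (mem_block.1 h).2.2.2.1 rfl) n hnp hn)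
    intro σ hσ
    constructor
    · rintro ⟨⟨k1, k2, k3, k4, k5⟩, y, hy, hyb⟩
      have hD : D2 G σ := by
        have ind : ∀ s ∈ σ, ∀ t ∈ σ, s ≠ u → s ≠ v → t ≠ u → t ≠ v → ¬ G.Adj s t := by
          intro s hs t ht su sv tu tv
          exact k5 s (by simp [hs, su, sv]) t (by simp [ht, tu, tv])
        have cross : ∀ s ∈ σ, ∀ t ∈ σ, s ≠ u → s ≠ v → t ≠ u → t ≠ v → s ≠ t →
            G.Adj u s → G.Adj v t → False := by
          intro s hs t ht su sv tu tv hst as at'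
          have e1 : s ∈ block G u v x := by
            rcases k4 s hs with h | h | h | h
            · exact absurd h su
            · exact absurd h sv
            · exact h
            · exact absurd as h.1
          have e2 : t ∈ block G u v x := by
            rcases k4 t ht with h | h | h | h
            · exact absurd h tu
            · exact absurd h tv
            · exact h
            · exact absurd at' h.2
          have f1 := mem_block.1 e1
          have f2 := mem_block.1 e2
          have g1 : G.Adj u x := f1.2.2.2.2.2.2.1.2 as
          have g2 : G.Adj v x := f2.2.2.2.2.2.2.2.1.2 at'
          exact hst ((f1.2.2.2.2.2.2.2.2 g1 g2).symm.trans (f2.2.2.2.2.2.2.2.2 g1 g2))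
        intro a ha b hb c hc d hd hab hcd hac had hbc hbd
        have nab := hab.ne
        have ncd := hcd.ne
        by_cases au : a = u
        · subst au
          by_cases bv : b = v
          · subst bv
            exact ind c hc d hd hac.symm hbc.symm had.symm hbd.symm hcd
          · by_cases cv : c = v
            · subst cv
              exact cross b hb d hd nab.symm bv had.symm ncd.symm hbd hab hcd
            · by_cases dv : d = v
              · subst dv
                exact cross b hb c hc nab.symm bv hac.symm ncd hbc hab hcd.symm
              · exact ind c hc d hd hac.symm cv had.symm dv hcd
        · by_cases bu : b = u
          · subst bu
            by_cases av : a = v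
            · subst av
              exact ind c hc d hd hbc.symm hac.symm hbd.symm had.symm hcd
            · by_cases cv : c = v
              · subst cv
                exact cross a ha d hd nab av hbd.symm ncd.symm had hab.symm hcd
              · by_cases dv : d = v
                · subst dv
                  exact cross a ha c hc nab av hbc.symm ncd hac hab.symm hcd.symm
                · exact ind c hc d hd hbc.symm cv hbd.symm dv hcd
          · by_cases av : a = v
            · subst av
              by_cases cu : c = u
              · subst cu
                exact cross d hd b hb ncd.symm had.symm bu nab.symm hbd.symm hcd hab
              · by_cases du : d = u
                · subst du
                  exact cross c hc b hb ncd hac.symm bu nab.symm hbc.symm hcd.symm hab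
                · exact ind c hc d hd cu hac.symm du had.symm hcd
            · by_cases bv : b = v
              · subst bv
                by_cases cu : c = u
                · subst cu
                  exact cross d hd a ha ncd.symm hbd.symm au av had.symm hcd hab.symm
                · by_cases du : d = u
                  · subst du
                    exact cross c hc a ha ncd hbc.symm au av hac.symm hcd.symm hab.symm
                  · exact ind c hc d hd cu hbc.symm du hbd.symm hcd
              · exact ind a ha b hb au av bu bv hab
      refine ⟨⟨k1, k2, k3, hD⟩, ?_⟩
      have hyb' := mem_block.1 hyb
      rw [hBeq σ k1 k2 hD y hy hyb'.2.2.1 hyb'.2.2.2.1 hyb'.2.2.2.2.2.1]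
      ext t
      rw [mem_block, mem_block]
      obtain ⟨q1, q2, q3, q4, q5, q6, q7, q8, q9⟩ := hyb'
      by_cases hc : G.Adj u x ∧ G.Adj v x
      · have := q9 hc.1 hc.2
        subst this
        exact Iff.rfl
      · rw [← q7, ← q8]
        have c1 : (G.Adj u x → G.Adj v x → y = t) ↔ True :=
          iff_true_intro (fun h h' => absurd ⟨h, h'⟩ hc)
        have c2 : (G.Adj u x → G.Adj v x → x = t) ↔ True :=
          iff_true_intro (fun h h' => absurd ⟨h, h'⟩ hc)
        rw [c1, c2]
        simp only [q1, q2, q3, q4, q5, q6, ne_eq, not_false_iff, true_and]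
    · rintro ⟨⟨k1, k2, k3, hD⟩, hBσ⟩
      have hmem : ∀ y ∈ σ, y ≠ u → y ≠ v → ¬ ZZ G u v y → y ∈ block G u v x := by
        intro y hy yu yv yZ
        rw [← hBσ]
        exact Finset.mem_biUnion.2 ⟨y, hy, hself y yu yv yZ⟩
      refine ⟨⟨k1, k2, k3, ?_, ?_⟩, ?_⟩
      · intro y hy
        by_cases y1 : y = u
        · exact Or.inl y1
        by_cases y2 : y = v
        · exact Or.inr (Or.inl y2)
        by_cases y3 : ZZ G u v y
        · exact Or.inr (Or.inr (Or.inr y3))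
        exact Or.inr (Or.inr (Or.inl (hmem y hy y1 y2 y3)))
      · intro s hs t ht hst
        simp only [Finset.mem_sdiff, Finset.mem_insert, Finset.mem_singleton, not_or] at hs ht
        exact hD u k1 v k2 s hs.1 t ht.1 huv hst (Ne.symm hs.2.1) (Ne.symm ht.2.1)
          (Ne.symm hs.2.2) (Ne.symm ht.2.2)
      · have : x ∈ σ.biUnion (block G u v) := hBσ ▸ hself x hxu hxv hxZ
        obtain ⟨y, hy, hxy⟩ := Finset.mem_biUnion.1 this
        have hh := mem_block.1 hxy
        exact ⟨y, hy, hmem y hy hh.1 hh.2.1 hh.2.2.2.2.1⟩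
  · have hnil : ∀ σ : Finset V, σ.biUnion (block G u v) = ∅ ↔
        ∀ x ∈ σ, x = u ∨ x = v ∨ ZZ G u v x := by
      intro σ
      constructor
      · intro h x hx
        by_contra hc
        have : x ∈ σ.biUnion (block G u v) := Finset.mem_biUnion.2 ⟨x, hx,
          hself x (by tauto) (by tauto) (by tauto)⟩
        rw [h] at this
        simp at this
      · intro h
        rw [Finset.eq_empty_iff_forall_notMem]
        intro t ht
        obtain ⟨x, hx, htx⟩ := Finset.mem_biUnion.1 ht
        rw [hblocknil x (h x hx)] at htx
        simp at htx
    rw [(hnil σ0).2 (fun x hx' => by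
      by_contra hc
      exact hx ⟨x, hx', by tauto⟩)]
    refine XX.congr ?_ (zpart (K := K) huv U ∅ W n (by omega))
    intro σ hσ
    rw [hnil]
    simp only [Finset.notMem_empty, not_false_iff, and_true]
    constructor
    · rintro ⟨k1, k2, k3, k4⟩
      refine ⟨⟨k1, k2, k3, ?_⟩, k4⟩
      intro a ha b hb c hc d hd hab hcd hac had hbc hbd
      have e : ∀ s ∈ σ, ∀ t ∈ σ, G.Adj s t → s = u ∨ s = v := by
        intro s hs t ht hst
        rcases k4 s hs with h | h | h
        · exact Or.inl h
        · exact Or.inr h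
        · rcases k4 t ht with h' | h' | h'
          · subst h'; exact absurd hst.symm h.1
          · subst h'; exact absurd hst.symm h.2
          · exact absurd hst (ZZ_indep hgap huv h h')
      have e1 := e a ha b hb hab
      have e2 := e b hb a ha hab.symm
      have e3 := e c hc d hd hcd
      have := hab.ne
      grind
    · rintro ⟨⟨k1, k2, k3, -⟩, k4⟩
      exact ⟨k1, k2, k3, k4⟩

lemma edgeInd (hgap : G.GapFree) {p : ℕ}
    (H : ∀ (Y : Finset V) (n : ℕ), n ≤ p + 1 → n + 2 ≤ Y.card → XX K (Indep G) Y n)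
    (W : Finset V) (n : ℕ) (hnp : n ≤ p + 1) (hn : n + 4 ≤ W.card) (R : Finset (V × V)) :
    XX K (fun σ => D2 G σ ∧ ∀ a ∈ σ, ∀ b ∈ σ, G.Adj a b → (a, b) ∈ R) W n := by
  classical
  induction R using Finset.induction_on with
  | empty =>
    refine XX.congr ?_ (H W n hnp (by omega))
    intro σ _
    constructor
    · intro h
      exact ⟨fun a ha b hb _ _ _ _ hab => absurd hab (h a ha b hb), fun a ha b hb hab =>
        absurd hab (h a ha b hb)⟩
    · rintro ⟨_, h⟩ a ha b hb hab
      simpa using h a ha b hb hab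
  | insert e R he ih =>
    obtain ⟨u, v⟩ := e
    apply XX.mid (Q := fun σ => u ∈ σ ∧ v ∈ σ ∧ G.Adj u v)
    · rintro A B C hAB hBC ⟨h1, h2⟩ ⟨k1, k2⟩
      exact ⟨fun a ha b hb c hc d hd =>
        k1 a (hBC ha) b (hBC hb) c (hBC hc) d (hBC hd), fun a ha b hb => k2 a (hBC ha) b (hBC hb)⟩
    · rintro σ τ h ⟨h1, h2, h3⟩
      exact ⟨h h1, h h2, h3⟩
    · by_cases hE : G.Adj u v ∧ (v, u) ∈ insert (u, v) R
      · obtain ⟨huv, hvu⟩ := hE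
        refine XX.congr ?_ (fib (K := K) hgap H huv
          (Finset.univ.filter (fun x => x ≠ u ∧ x ≠ v ∧
            ((G.Adj u x ∧ ((u, x) ∉ insert (u, v) R ∨ (x, u) ∉ insert (u, v) R)) ∨
             (G.Adj v x ∧ ((v, x) ∉ insert (u, v) R ∨ (x, v) ∉ insert (u, v) R))))) W n hnp hn)
        intro σ hσ
        constructor
        · rintro ⟨h1, h2, h3, h4⟩
          refine ⟨⟨h4, ?_⟩, h1, h2, huv⟩
          rw [Finset.disjoint_left] at h3
          intro a ha b hb hab
          have h3a := h3 ha
          have h3b := h3 hb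
          simp only [Finset.mem_filter, Finset.mem_univ, true_and] at h3a h3b
          have ne := hab.ne
          by_cases au : a = u
          · subst au
            by_cases bv : b = v
            · subst bv; exact Finset.mem_insert_self _ _
            · by_contra hc
              exact h3b ⟨ne.symm, bv, Or.inl ⟨hab, Or.inl hc⟩⟩
          · by_cases av : a = v
            · subst av
              by_cases bu : b = u
              · subst bu; exact hvu
              · by_contra hc
                exact h3b ⟨bu, ne.symm, Or.inr ⟨hab, Or.inl hc⟩⟩
            · by_cases bu : b = u
              · subst bu
                by_contra hc
                exact h3a ⟨au, av, Or.inl ⟨hab.symm, Or.inr hc⟩⟩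
              · by_cases bv : b = v
                · subst bv
                  by_contra hc
                  exact h3a ⟨au, av, Or.inr ⟨hab.symm, Or.inr hc⟩⟩
                · exact (h4 u h1 v h2 a ha b hb huv hab (Ne.symm au) (Ne.symm bu)
                    (Ne.symm av) (Ne.symm bv)).elim
        · rintro ⟨⟨h4, h5⟩, h1, h2, -⟩
          refine ⟨h1, h2, ?_, h4⟩
          rw [Finset.disjoint_left]
          intro x hx hxf
          simp only [Finset.mem_filter, Finset.mem_univ, true_and] at hxf
          rcases hxf.2.2 with ⟨hh, h6 | h6⟩ | ⟨hh, h6 | h6⟩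
          · exact h6 (h5 _ h1 _ hx hh)
          · exact h6 (h5 _ hx _ h1 hh.symm)
          · exact h6 (h5 _ h2 _ hx hh)
          · exact h6 (h5 _ hx _ h2 hh.symm)
      · apply XX.empty
        rintro σ hσ ⟨⟨h1, h2⟩, h3, h4, h5⟩
        exact absurd ⟨h5, h2 v h4 u h3 h5.symm⟩ hE
    · refine XX.congr ?_ ih
      intro σ hσ
      constructor
      · rintro ⟨h1, h2⟩
        exact ⟨⟨h1, fun a ha b hb hab => Finset.mem_insert_of_mem (h2 a ha b hb hab)⟩,
          fun h => he (h2 u h.1 v h.2.1 h.2.2)⟩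
      · rintro ⟨⟨h1, h2⟩, h3⟩
        refine ⟨h1, fun a ha b hb hab => ?_⟩
        rcases Finset.mem_insert.1 (h2 a ha b hb hab) with h | h
        · simp only [Prod.mk.injEq] at h
          exact absurd ⟨h.1 ▸ ha, h.2 ▸ hb, h.1 ▸ h.2 ▸ hab⟩ h3
        · exact h

lemma xx_small (W : Finset V) (n : ℕ) (hn2 : 2 ≤ n) (hn : W.card ≤ n + 2) :
    XX K (D2 G) W n := by
  have h3 : ∀ σ : Finset V, σ.card ≤ 3 → D2 G σ := by
    intro σ hσ a ha b hb c hc d hd hab hcd hac had hbc hbd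
    have : ({a, b, c, d} : Finset V) ⊆ σ := by
      intro x hx
      simp only [Finset.mem_insert, Finset.mem_singleton] at hx
      rcases hx with rfl | rfl | rfl | rfl <;> assumption
    have h4 := Finset.card_le_card this
    have : ({a, b, c, d} : Finset V).card = 4 := by
      rw [Finset.card_insert_of_notMem, Finset.card_insert_of_notMem, Finset.card_pair hcd.ne]
      · simp [hbc, hbd]
      · simp [hab.ne, hac, had]
    omega
  rcases W.eq_empty_or_nonempty with rfl | ⟨y, hy⟩
  · apply XX.empty
    intro σ hσ _
    simp only [Finset.card_empty]
    omega
  have hfull : Ex K (rV : V → ℕ) (fun F => F ⊆ W) n := by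
    apply Ex.toggle rV rV_inj y
    intro F _
    rw [Finset.insert_subset_iff]
    simp [hy]
  intro z hz hz0
  obtain ⟨w, hw, hw2⟩ := hfull z (fun T hT => ⟨(hz T hT).1.1, (hz T hT).2⟩) (by
    intro S hS
    by_cases hc : S.card + 1 = n
    · apply hz0 S ⟨hS, h3 _ _⟩
      have := Finset.card_sdiff_add_card_eq_card hS
      omega
    · apply bd_zero
      intro t ht
      by_contra hne
      have := (hz _ hne).2
      rw [Finset.card_insert_of_notMem ht] at this
      exact hc this)
  refine ⟨w, fun T hT => ?_, fun S hS => hw2 S hS.1⟩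
  obtain ⟨h1, h2⟩ := hw T hT
  refine ⟨⟨h1, h3 _ ?_⟩, h2⟩
  have := Finset.card_sdiff_add_card_eq_card h1
  omega

lemma xx_main (hgap : G.GapFree) {p : ℕ}
    (H : ∀ (Y : Finset V) (n : ℕ), n ≤ p + 1 → n + 2 ≤ Y.card → XX K (Indep G) Y n)
    (W : Finset V) (n : ℕ) (hn2 : 2 ≤ n) (hnp : n ≤ p + 1) (hn : W.card ≠ n + 3) :
    XX K (D2 G) W n := by
  rcases Nat.lt_or_gt_of_ne hn with h | h
  · exact xx_small W n hn2 (by omega)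
  · refine XX.congr ?_ (edgeInd (K := K) hgap H W n hnp (by omega) Finset.univ)
    intro σ _
    simp

end Graph

section Link
variable {V K : Type*} [Field K] {k : ℕ}

lemma diff_apply (gens : Fin k → (V →₀ ℕ)) (f : Finset (Fin k) →₀ K) (S : Finset (Fin k)) :
    taylorDiff gens f S =
      bd (fun i : Fin k => (i : ℕ)) (res (fun T => T.sup gens = S.sup gens) f) S := by
  classical
  have e1 : taylorDiff gens f S = ∑ T : Finset (Fin k), f T * taylorBoundary (K := K) gens T S := by
    unfold taylorDiff
    rw [Finsupp.lsum_apply, Finsupp.sum_fintype _ _ (by simp), Finsupp.finsetSum_apply]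
    simp
  have e2 : ∀ T : Finset (Fin k), f T * taylorBoundary (K := K) gens T S =
      ∑ t : Fin k, if t ∈ T ∧ T.erase t = S then
        (if S.sup gens = T.sup gens then (-1 : K) ^ (T.filter fun s => s < t).card * f T else 0)
        else 0 := by
    intro T
    unfold taylorBoundary taylorLcm
    rw [Finsupp.finsetSum_apply, Finset.mul_sum, ← Finset.sum_filter_add_sum_filter_not
      (Finset.univ : Finset (Fin k)) (fun t => t ∈ T)]
    rw [Finset.sum_eq_zero (s := Finset.univ.filter (fun t => ¬ t ∈ T)), add_zero]
    · have : Finset.univ.filter (fun t => t ∈ T) = T := by ext; simp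
      rw [this]
      refine Finset.sum_congr rfl fun t ht => ?_
      by_cases h : T.erase t = S
      · subst h
        by_cases h2 : (T.erase t).sup gens = T.sup gens
        · simp [ht, h2, mul_comm]
        · simp [h2]
      · by_cases h2 : (T.erase t).sup gens = T.sup gens
        · simp [h, h2]
        · simp [h, h2]
    · intro t ht
      simp only [Finset.mem_filter, Finset.mem_univ, true_and] at ht
      simp [ht]
  rw [e1, Finset.sum_congr rfl (fun T _ => e2 T), Finset.sum_comm]
  unfold bd
  rw [← Finset.sum_subset (Finset.subset_univ Sᶜ)]
  · refine Finset.sum_congr rfl fun t ht => ?_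
    have ht' : t ∉ S := by simpa using ht
    rw [Finset.sum_eq_single (insert t S)]
    · rw [if_pos ⟨Finset.mem_insert_self _ _, Finset.erase_insert ht'⟩]
      have e3 : (insert t S).filter (fun s => s < t) =
          S.filter (fun s : Fin k => (s : ℕ) < (t : ℕ)) := by
        ext x
        simp only [Finset.mem_filter, Finset.mem_insert, Fin.val_fin_lt]
        constructor
        · rintro ⟨rfl | h, h2⟩
          · exact absurd h2 (lt_irrefl _)
          · exact ⟨h, h2⟩
        · rintro ⟨h, h2⟩
          exact ⟨Or.inr h, h2⟩
      by_cases h : S.sup gens = (insert t S).sup gens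
      · rw [if_pos h, res_pos h.symm, e3]
        rfl
      · rw [if_neg h, res_neg (fun h' => h h'.symm), mul_zero]
    · intro T _ hT
      rw [if_neg]
      rintro ⟨h1, rfl⟩
      exact hT (Finset.insert_erase h1).symm
    · simp
  · intro t _ ht
    apply Finset.sum_eq_zero
    intro T _
    rw [if_neg]
    rintro ⟨h1, rfl⟩
    simp at ht

lemma mem_piece (gens : Fin k → (V →₀ ℕ)) (n j : ℕ) (f : Finset (Fin k) →₀ K) :
    f ∈ taylorPiece gens n j ↔
      ∀ T, f T ≠ 0 → monomialDegree (T.sup gens) = j ∧ T.card = n := by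
  have : taylorPiece (K := K) gens n j = Finsupp.supported K K
      {T : Finset (Fin k) | T.card = n ∧ monomialDegree (T.sup gens) = j} := by
    rw [Finsupp.supported_eq_span_single]
    unfold taylorPiece taylorLcm
    congr 1
    ext f
    simp only [Set.mem_ofPred_eq, Set.mem_image]
    constructor
    · rintro ⟨T, h1, h2, h3⟩
      exact ⟨T, ⟨h1, h2⟩, h3.symm⟩
    · rintro ⟨T, ⟨h1, h2⟩, h3⟩
      exact ⟨T, h1, h2, h3.symm⟩
  rw [this, Finsupp.mem_supported]
  constructor
  · intro h T hT
    have := h (Finsupp.mem_support_iff.2 hT)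
    exact ⟨this.2, this.1⟩
  · intro h T hT
    have := h T (Finsupp.mem_support_iff.1 hT)
    exact ⟨this.2, this.1⟩

lemma tor_to_ex (gens : Fin k → (V →₀ ℕ)) (n j : ℕ)
    (h : ¬ taylorHomologyNonzero (K := K) gens n j) (m : V →₀ ℕ) (hm : monomialDegree m = j) :
    Ex K (fun i : Fin k => (i : ℕ)) (fun T => T.sup gens = m) n := by
  unfold taylorHomologyNonzero at h
  rw [not_not] at h
  intro z hz hz0
  have hf : Finsupp.equivFunOnFinite.symm z ∈ Submodule.map (taylorDiff (K := K) gens)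
      (taylorPiece (K := K) gens (n + 1) j) := by
    apply h
    refine ⟨?_, ?_⟩
    · rw [SetLike.mem_coe, LinearMap.mem_ker]
      ext S
      rw [diff_apply]
      by_cases hS : S.sup gens = m
      · rw [Finsupp.zero_apply, ← hz0 S hS]
        apply bd_congr
        intro t _
        by_cases hT : (insert t S).sup gens = S.sup gens
        · rw [res_pos hT]; rfl
        · rw [res_neg hT]
          by_contra hne
          exact hT ((hz _ (Ne.symm hne)).1.trans hS.symm)
      · apply bd_zero
        intro t _
        by_contra hne
        obtain ⟨h1, h2⟩ := res_ne hne
        exact hS (h1.symm.trans (hz _ h2).1)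
    · rw [SetLike.mem_coe, mem_piece]
      intro T hT
      obtain ⟨h1, h2⟩ := hz T hT
      exact ⟨by rw [h1, hm], h2⟩
  obtain ⟨w, hw, hwz⟩ := hf
  rw [SetLike.mem_coe, mem_piece] at hw
  refine ⟨res (fun T => T.sup gens = m) w, ?_, ?_⟩
  · intro T hT
    obtain ⟨h1, h2⟩ := res_ne hT
    exact ⟨h1, (hw T h2).2⟩
  · intro S hS
    have := DFunLike.congr_fun hwz S
    rw [diff_apply, hS] at this
    exact this

lemma ex_to_tor (gens : Fin k → (V →₀ ℕ)) (n j : ℕ)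
    (h : ∀ m, monomialDegree m = j →
      Ex K (fun i : Fin k => (i : ℕ)) (fun T => T.sup gens = m) n) :
    ¬ taylorHomologyNonzero (K := K) gens n j := by
  unfold taylorHomologyNonzero
  rw [not_not]
  rintro f ⟨hf1, hf2⟩
  rw [SetLike.mem_coe, LinearMap.mem_ker] at hf1
  rw [SetLike.mem_coe, mem_piece] at hf2
  have key : ∀ m : V →₀ ℕ, ∃ w : Finset (Fin k) → K,
      (∀ T, w T ≠ 0 → (T.sup gens = m ∧ monomialDegree m = j) ∧ T.card = n + 1) ∧
      ∀ S, S.sup gens = m → bd (fun i : Fin k => (i : ℕ)) w S = f S := by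
    intro m
    by_cases hm : monomialDegree m = j
    · obtain ⟨w, hw, hw2⟩ := h m hm (res (fun T => T.sup gens = m) f)
        (fun T hT => ⟨(res_ne hT).1, (hf2 T (res_ne hT).2).2⟩)
        (fun S hS => by
          have := DFunLike.congr_fun hf1 S
          rw [diff_apply, hS] at this
          exact this)
      refine ⟨w, fun T hT => ⟨⟨(hw T hT).1, hm⟩, (hw T hT).2⟩, fun S hS => ?_⟩
      rw [hw2 S hS, res_pos hS]
    · refine ⟨fun _ => 0, by simp, fun S hS => ?_⟩
      rw [bd_zero _ _ _ (fun _ _ => rfl)]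
      by_contra hne
      exact hm (hS ▸ (hf2 S (Ne.symm hne)).1)
  choose w hw hw2 using key
  refine ⟨Finsupp.equivFunOnFinite.symm (fun T => w (T.sup gens) T), ?_, ?_⟩
  · rw [SetLike.mem_coe, mem_piece]
    intro T hT
    have := hw _ T hT
    exact ⟨this.1.2, this.2⟩
  · ext S
    rw [diff_apply, ← hw2 _ S rfl]
    apply bd_congr
    intro t _
    by_cases hT : (insert t S).sup gens = S.sup gens
    · rw [res_pos hT]
      change w ((insert t S).sup gens) (insert t S) = _
      rw [hT]
    · rw [res_neg hT]
      by_contra hne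
      exact hT (hw _ _ (Ne.symm hne)).1.1

lemma mem_span_iff (gens : Fin k → (V →₀ ℕ)) (c : V →₀ ℕ) :
    monomial c (1 : K) ∈ monomialSpan (K := K) gens ↔ ∃ i, gens i ≤ c := by
  classical
  have : (Set.range fun i => monomial (gens i) (1 : K)) =
      (fun s => monomial s (1 : K)) '' Set.range gens := by
    ext x; simp
  unfold monomialSpan
  rw [this, MvPolynomial.mem_ideal_span_monomial_image, support_monomial, if_neg one_ne_zero]
  simp

lemma list_prod (l : List V) :
    (l.map (X : V → MvPolynomial V K)).prod =
      monomial ((l.map (fun v => Finsupp.single v 1)).sum) (1 : K) := by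
  induction l with
  | nil => simp
  | cons a l ih =>
    rw [List.map_cons, List.prod_cons, ih, List.map_cons, List.sum_cons, X, monomial_mul, one_mul]

lemma list_sum [DecidableEq V] (l : List V) (v : V) :
    ((l.map (fun v => (Finsupp.single v 1 : V →₀ ℕ))).sum) v = l.count v := by
  induction l with
  | nil => simp
  | cons a l ih =>
    rw [List.map_cons, List.sum_cons, Finsupp.add_apply, ih, List.count_cons, Finsupp.single_apply]
    by_cases h : a = v
    · simp [h, add_comm]
    · simp [h]

/-- two disjoint edges in the support -/
def J4 (G : SimpleGraph V) (c : V →₀ ℕ) : Prop :=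
  ∃ x y z w, G.Adj x y ∧ G.Adj z w ∧ x ≠ z ∧ x ≠ w ∧ y ≠ z ∧ y ≠ w ∧
    c x ≠ 0 ∧ c y ≠ 0 ∧ c z ≠ 0 ∧ c w ≠ 0

lemma mem_path (G : SimpleGraph V) (hgap : G.GapFree) (c : V →₀ ℕ) :
    monomial c (1 : K) ∈ pathIdeal (K := K) G 4 ↔ J4 G c := by
  classical
  have e : { p : MvPolynomial V K | ∃ l : List V, G.IsPathList l ∧ l.length = 4 ∧
      p = (l.map X).prod } = (fun s => monomial s (1 : K)) '' {s | ∃ l : List V,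
        G.IsPathList l ∧ l.length = 4 ∧ s = (l.map (fun v => Finsupp.single v 1)).sum} := by
    ext p
    simp only [Set.mem_ofPred_eq, Set.mem_image]
    constructor
    · rintro ⟨l, h1, h2, h3⟩
      exact ⟨_, ⟨l, h1, h2, rfl⟩, by rw [h3, list_prod]⟩
    · rintro ⟨s, ⟨l, h1, h2, rfl⟩, rfl⟩
      exact ⟨l, h1, h2, by rw [list_prod]⟩
  have e2 : ∀ l : List V, l.Nodup →
      ((l.map (fun v => (Finsupp.single v 1 : V →₀ ℕ))).sum ≤ c ↔ ∀ v ∈ l, c v ≠ 0) := by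
    intro l hl
    constructor
    · intro h v hv
      have := h v
      rw [list_sum] at this
      have h2 := List.count_pos_iff.2 hv
      omega
    · intro h v
      rw [list_sum]
      by_cases hv : v ∈ l
      · have := h v hv
        have h2 := List.nodup_iff_count_le_one.1 hl v
        omega
      · rw [List.count_eq_zero_of_not_mem hv]
        exact Nat.zero_le _
  unfold pathIdeal
  rw [e, MvPolynomial.mem_ideal_span_monomial_image, support_monomial, if_neg one_ne_zero]
  simp only [Finset.mem_singleton, forall_eq, Set.mem_ofPred_eq]
  constructor
  · rintro ⟨_, ⟨l, ⟨hc, hn⟩, hl, rfl⟩, hle⟩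
    rw [e2 l hn] at hle
    match l, hl with
    | [x, y, z, w], _ =>
      have hc1 := List.isChain_cons_cons.1 hc
      have hc2 := List.isChain_cons_cons.1 hc1.2
      have hc3 := List.isChain_cons_cons.1 hc2.2
      simp at hn hle
      exact ⟨x, y, z, w, hc1.1, hc3.1, by tauto⟩
  · rintro ⟨x, y, z, w, hxy, hzw, n1, n2, n3, n4, c1, c2, c3, c4⟩
    have mk : ∀ a b d f : V, G.Adj a b → G.Adj b d → G.Adj d f → a ≠ d → a ≠ f → b ≠ f →
        c a ≠ 0 → c b ≠ 0 → c d ≠ 0 → c f ≠ 0 →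
        ∃ si, (∃ l : List V, G.IsPathList l ∧ l.length = 4 ∧
          si = (l.map (fun v => Finsupp.single v 1)).sum) ∧ si ≤ c := by
      intro a b d f h1 h2 h3 q1 q2 q3 p1 p2 p3 p4
      have hnd : [a, b, d, f].Nodup := by
        simp [h1.ne, h2.ne, h3.ne, q1, q2, q3]
      refine ⟨_, ⟨[a, b, d, f], ⟨?_, hnd⟩, rfl, rfl⟩, ?_⟩
      · exact List.isChain_cons_cons.2 ⟨h1, List.isChain_cons_cons.2 ⟨h2,
          List.isChain_cons_cons.2 ⟨h3, List.isChain_singleton _⟩⟩⟩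
      · rw [e2 _ hnd]
        simp [p1, p2, p3, p4]
    rcases hgap x y z w hxy hzw n1 n2 n3 n4 with h | h | h | h
    · exact mk y x z w hxy.symm h hzw n3 n4 n2 c2 c1 c3 c4
    · exact mk y x w z hxy.symm h hzw.symm n4 n3 n1 c2 c1 c4 c3
    · exact mk x y z w hxy h hzw n1 n2 n4 c1 c2 c3 c4
    · exact mk x y w z hxy h hzw.symm n2 n1 n3 c1 c2 c4 c3

end Link

section Final
variable {V K : Type*} [Fintype V] [DecidableEq V] [Field K]

lemma edge_gens (K : Type*) [Field K] (G : SimpleGraph V) :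
    ∃ (k : ℕ) (gens : Fin k → (V →₀ ℕ)),
    edgeIdeal (K := K) G = monomialSpan gens ∧
    ∀ s, (∃ i, gens i = s) ↔
      ∃ u v, G.Adj u v ∧ s = Finsupp.single u 1 + Finsupp.single v 1 := by
  classical
  let E := {q : V × V // G.Adj q.1 q.2}
  let e := Fintype.equivFin E
  have hg : ∀ s : V →₀ ℕ, (∃ i, Finsupp.single (e.symm i).1.1 1 +
      Finsupp.single (e.symm i).1.2 1 = s) ↔
      ∃ u v, G.Adj u v ∧ s = Finsupp.single u 1 + Finsupp.single v 1 := by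
    intro s
    constructor
    · rintro ⟨i, rfl⟩
      exact ⟨_, _, (e.symm i).2, rfl⟩
    · rintro ⟨u, v, h, rfl⟩
      refine ⟨e ⟨(u, v), h⟩, ?_⟩
      rw [Equiv.symm_apply_apply]
  refine ⟨Fintype.card E, fun i => Finsupp.single (e.symm i).1.1 1 +
    Finsupp.single (e.symm i).1.2 1, ?_, hg⟩
  unfold edgeIdeal monomialSpan
  congr 1
  ext p
  simp only [Set.mem_ofPred_eq, Set.mem_range]
  have hX : ∀ u v : V, (X u * X v : MvPolynomial V K) =
      monomial (Finsupp.single u 1 + Finsupp.single v 1) 1 := by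
    intro u v
    rw [X, X, monomial_mul, one_mul]
  constructor
  · rintro ⟨u, v, h, rfl⟩
    obtain ⟨i, hi⟩ := (hg _).2 ⟨u, v, h, rfl⟩
    exact ⟨i, by rw [hi, hX]⟩
  · rintro ⟨i, rfl⟩
    exact ⟨_, _, (e.symm i).2, (hX _ _).symm⟩

lemma deg_ind (W : Finset V) : monomialDegree (ind W) = W.card := by
  unfold monomialDegree
  rw [Finsupp.sum_fintype _ _ (by simp)]
  simp [ind_apply]

lemma ind_le_iff {F W : Finset V} : ind F ≤ ind W ↔ F ⊆ W := by
  refine ⟨fun h v hv => ?_, ind_mono⟩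
  have := h v
  rw [ind_apply, ind_apply, if_pos hv] at this
  by_contra hc
  rw [if_neg hc] at this
  omega

lemma ind_sub {F W : Finset V} : ind W - ind F = ind (W \ F) := by
  ext v
  rw [Finsupp.tsub_apply, ind_apply, ind_apply, ind_apply]
  by_cases h1 : v ∈ W <;> by_cases h2 : v ∈ F <;> simp [h1, h2]

lemma hypH (G : SimpleGraph V) (p : ℕ)
    (hlin : ∀ i j : ℕ, 1 ≤ i → i ≤ p → j ≠ i + 2 →
      ¬ IdealTorNonzero (edgeIdeal (K := K) G) i j)
    (Y : Finset V) (n : ℕ) (hn : n ≤ p + 1) (hY : n + 2 ≤ Y.card) : XX K (Indep G) Y n := by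
  obtain ⟨k, gens, hI, hg⟩ := edge_gens K G
  have hT : Ex K (fun i : Fin k => (i : ℕ)) (fun T => T.sup gens = ind Y) n := by
    by_cases h2 : 2 ≤ n
    · refine tor_to_ex gens n Y.card (fun hnz => ?_) (ind Y) (deg_ind Y)
      refine hlin (n - 1) Y.card (by omega) (by omega) (by omega) ⟨k, gens, hI, ?_⟩
      rw [Nat.sub_add_cancel (by omega)]
      exact hnz
    · apply Ex.empty
      intro T hT hc
      have hd := deg_ind Y
      rw [← hT] at hd
      have : n = 0 ∨ n = 1 := by omega
      rcases this with rfl | rfl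
      · rw [Finset.card_eq_zero] at hc
        subst hc
        have : monomialDegree (Finset.sup ∅ gens) = 0 := by
          rw [Finset.sup_empty, bot_eq_zero]
          simp [monomialDegree]
        omega
      · obtain ⟨i, rfl⟩ := Finset.card_eq_one.1 hc
        rw [Finset.sup_singleton] at hd
        obtain ⟨u, v, h, hs⟩ := (hg _).1 ⟨i, rfl⟩
        have : monomialDegree (gens i) = 2 := by
          rw [hs]
          unfold monomialDegree
          rw [Finsupp.sum_add_index' (by simp) (by simp), Finsupp.sum_single_index rfl,
            Finsupp.sum_single_index rfl]
        omega
  have hK := (tay_iff_kos gens (ind Y) (fun c => ∃ i, gens i ≤ c) (fun _ => Iff.rfl) n).1 hT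
  refine Ex.congr (fun F => ?_) hK
  unfold Kos
  rw [ind_le_iff, ind_sub]
  refine and_congr_right fun _ => ?_
  constructor
  · intro h a ha b hb hab
    obtain ⟨i, hi⟩ := (hg _).2 ⟨a, b, hab, rfl⟩
    refine h ⟨i, ?_⟩
    rw [hi]
    intro v
    rw [Finsupp.add_apply, ind_apply]
    have := hab.ne
    by_cases h1 : a = v
    · subst h1
      rw [if_pos ha, Finsupp.single_eq_same, Finsupp.single_eq_of_ne this, add_zero]
    · rw [Finsupp.single_eq_of_ne (Ne.symm h1)]
      by_cases h2 : b = v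
      · subst h2
        rw [if_pos hb, Finsupp.single_eq_same]
      · rw [Finsupp.single_eq_of_ne (Ne.symm h2)]
        exact Nat.zero_le _
  · rintro h ⟨i, hi⟩
    obtain ⟨a, b, hab, hs⟩ := (hg _).1 ⟨i, rfl⟩
    rw [hs] at hi
    have q1 := hi a
    have q2 := hi b
    rw [Finsupp.add_apply, ind_apply, Finsupp.single_eq_same] at q1 q2
    refine h a ?_ b ?_ hab
    · by_contra hc
      rw [if_neg hc] at q1
      omega
    · by_contra hc
      rw [if_neg hc] at q2
      omega

lemma kos4 (G : SimpleGraph V) (n : ℕ)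
    (hX : ∀ W : Finset V, W.card ≠ n + 3 → XX K (D2 G) W n)
    (m : V →₀ ℕ) (hm : monomialDegree m ≠ n + 3) : Ex K rV (Kos (J4 G) m) n := by
  by_cases h2 : ∃ v, 2 ≤ m v
  · obtain ⟨v, hv⟩ := h2
    apply Ex.toggle rV rV_inj v
    intro F hF
    have hz : ∀ x, (m - ind F) x ≠ 0 ↔ (m - ind (insert v F)) x ≠ 0 := by
      intro x
      rw [Finsupp.tsub_apply, Finsupp.tsub_apply, ind_apply, ind_apply]
      by_cases hx : x = v
      · subst hx
        simp only [hF, if_false, Finset.mem_insert_self, if_true]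
        omega
      · simp [hx]
    have hJ : J4 G (m - ind F) ↔ J4 G (m - ind (insert v F)) := by
      unfold J4
      simp only [hz]
    unfold Kos
    rw [hJ]
    refine and_congr_left fun _ => ?_
    constructor
    · intro h x
      have := h x
      rw [ind_apply] at this ⊢
      by_cases hx : x = v
      · subst hx
        simp only [Finset.mem_insert_self, if_true]
        omega
      · simpa [hx] using this
    · exact fun h => (ind_mono (Finset.subset_insert _ _)).trans h
  · push Not at h2
    have hmW : m = ind (Finset.univ.filter fun v => m v ≠ 0) := by
      ext v
      have := h2 v
      rw [ind_apply]
      simp only [Finset.mem_filter, Finset.mem_univ, true_and]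
      split_ifs with h <;> omega
    set W := Finset.univ.filter fun v => m v ≠ 0
    rw [hmW] at hm ⊢
    rw [deg_ind] at hm
    refine Ex.congr (fun F => ?_) (hX W hm)
    unfold Kos
    rw [ind_le_iff, ind_sub]
    refine and_congr_right fun _ => ?_
    have hne : ∀ x, ind (W \ F) x ≠ 0 ↔ x ∈ W \ F := by
      intro x
      rw [ind_apply]
      by_cases h : x ∈ W \ F <;> simp [h]
    unfold J4 D2
    simp only [hne]
    constructor
    · rintro h ⟨x, y, z, w, a1, a2, a3, a4, a5, a6, a7, a8, a9, a10⟩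
      exact h x a7 y a8 z a9 w a10 a1 a2 a3 a4 a5 a6
    · intro h x a7 y a8 z a9 w a10 a1 a2 a3 a4 a5 a6
      exact h ⟨x, y, z, w, a1, a2, a3, a4, a5, a6, a7, a8, a9, a10⟩

lemma final (G : SimpleGraph V) (hgap : G.GapFree) (p : ℕ)
    (hlin : ∀ i j : ℕ, 1 ≤ i → i ≤ p → j ≠ i + 2 →
      ¬ IdealTorNonzero (edgeIdeal (K := K) G) i j) :
    ∀ i j : ℕ, 1 ≤ i → i ≤ p → j ≠ i + 4 →
      ¬ IdealTorNonzero (pathIdeal (K := K) G 4) i j := by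
  rintro i j h1 hp hj ⟨k, gens, hI, hnz⟩
  refine ex_to_tor gens (i + 1) j (fun m hm => ?_) hnz
  refine (tay_iff_kos gens m (J4 G) (fun c => ?_) (i + 1)).2 (kos4 G (i + 1) (fun W hW => ?_) m ?_)
  · rw [← mem_path (K := K) G hgap, hI, mem_span_iff]
  · exact xx_main hgap (hypH G p hlin) W (i + 1) (by omega) (by omega) hW
  · omega

end Final

end PathLin

/-- If `G` is gap-free with `I_4(G) ≠ 0` and the minimal free resolution
of `I(G)` is linear up to step `p ≥ 2` (`Tor_i(I(G),K)_j = 0` for `1 ≤ i ≤ p`,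
`j ≠ i + 2`), then the minimal free resolution of `I_4(G)` is linear up to step `p`
(`Tor_i(I_4(G),K)_j = 0` for `1 ≤ i ≤ p`, `j ≠ i + 4`). -/
theorem stmt7 {V K : Type*} [Fintype V] [Field K] (G : SimpleGraph V)
    (hgap : G.GapFree) (h4 : pathIdeal (K := K) G 4 ≠ ⊥)
    (p : ℕ) (hp : 2 ≤ p)
    (hlin : ∀ i j : ℕ, 1 ≤ i → i ≤ p → j ≠ i + 2 →
      ¬ IdealTorNonzero (edgeIdeal (K := K) G) i j) :
    ∀ i j : ℕ, 1 ≤ i → i ≤ p → j ≠ i + 4 →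
      ¬ IdealTorNonzero (pathIdeal (K := K) G 4) i j := by
  classical
  exact PathLin.final G hgap p hlin
end
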